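/- arXiv:math/0009238 — 3 statements merged into one kernel-verified Lean document; each statement's English description precedes it below -/
import Mathlib

section
/- Let β > 1/2 with β ∉ {3/2, 5/2, 7/2, …}. Then for every real ζ with 0 < ζ < 1: (1/(β−1/2)) · √(ζ(1+ζ)) · ₂F₁(1, 1−β; 3/2−β; −ζ) + 2^{2β−1} (Γ(β)²/Γ(2β)) · ζ^β · sec(πβ) = (1/β) · √(ζ/(1+ζ)) · ₂F₁(1, 1/2; β+1; 1/(1+ζ)). -/
open Real

/-- The Gauss hypergeometric series `₂F₁(a,b;c;x)` for real parameters,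
defined via Pochhammer symbols `(a)_r = a(a+1)⋯(a+r−1)`. -/
noncomputable def F21 (a b c x : ℝ) : ℝ :=
  ∑' r : ℕ, ((ascPochhammer ℝ r).eval a * (ascPochhammer ℝ r).eval b /
    ((ascPochhammer ℝ r).eval c * (r.factorial : ℝ))) * x ^ r

/-!
With `x = 1 / (1 + ζ)`, the right-hand series is a multiple of the incomplete beta function
`B_x(β, 1/2 - β)` and, after a Pfaff transformation, the left-hand one is a multiple of
`B_{1-x}(1/2 - β, β)`. The identity is therefore `B_x(p, q) + B_{1-x}(q, p) = B(p, q)`, continued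
from `p, q > 0` to negative parameters by recurrences that raise `p` or `q` by one.

The Pfaff transformation and the series expansion of the incomplete beta integral both hold because
their two sides satisfy the same recurrence in `n` when a parameter is shifted by `n`. The
difference `d` is then a bounded solution of `d n = a n * d (n + 1)` with `lim |a n| < 1`, hence
zero.
-/

open Filter Topology
open ProbabilityTheory (beta)

/-- The quotient `(b)_r / (c)_r` of Pochhammer symbols, which is the coefficient of `x ^ r` in
`₂F₁(1, b; c; x)`. If `c` is a nonpositive integer, it takes the junk value `0` for large `r`. -/
noncomputable def pochhammerRatio (b c : ℝ) (r : ℕ) : ℝ :=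
  (ascPochhammer ℝ r).eval b / (ascPochhammer ℝ r).eval c

@[simp]
lemma pochhammerRatio_zero (b c : ℝ) : pochhammerRatio b c 0 = 1 := by simp [pochhammerRatio]

lemma pochhammerRatio_succ (b c : ℝ) (r : ℕ) :
    pochhammerRatio b c (r + 1) = pochhammerRatio b c r * ((b + r) / (c + r)) := by
  simp only [pochhammerRatio, ascPochhammer_succ_eval, mul_div_mul_comm]

lemma pochhammerRatio_succ_left (b c : ℝ) (r : ℕ) :
    pochhammerRatio b c (r + 1) = b / c * pochhammerRatio (b + 1) (c + 1) r := by
  simp only [pochhammerRatio, ascPochhammer_succ_left, Polynomial.eval_mul, Polynomial.eval_X,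
    Polynomial.eval_comp, Polynomial.eval_add, Polynomial.eval_one, mul_div_mul_comm]

lemma pochhammerRatio_add_one_right {c : ℝ} (hc : c ≠ 0) (b : ℝ) (r : ℕ) :
    pochhammerRatio b (c + 1) r = c / (c + r) * pochhammerRatio b c r := by
  have shift : (ascPochhammer ℝ r).eval c * (c + r) = c * (ascPochhammer ℝ r).eval (c + 1) := by
    rw [← ascPochhammer_succ_eval, ascPochhammer_succ_left]
    simp only [Polynomial.eval_mul, Polynomial.eval_X, Polynomial.eval_comp, Polynomial.eval_add,
      Polynomial.eval_one]
  rw [pochhammerRatio, pochhammerRatio, div_mul_div_comm, mul_comm (c + r), shift,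
    mul_div_mul_left _ _ hc]

lemma abs_pochhammerRatio_le {b c k : ℝ} (hc : 1 ≤ c) (hk : 0 ≤ k) (hb : |b| ≤ c + k) (r : ℕ) :
    |pochhammerRatio b c r| ≤ pochhammerRatio (1 + k) 1 r := by
  induction r with
  | zero => simp
  | succ r ih =>
    have : (0 : ℝ) ≤ r := r.cast_nonneg
    have factor_le : |(b + r) / (c + r)| ≤ (1 + k + r) / (1 + r) := by
      have numerator_le : |b + r| ≤ c + k + r := (abs_add_le b r).trans (by simpa using hb)
      rw [abs_div, abs_of_pos (show 0 < c + r by linarith)]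
      refine (div_le_div_of_nonneg_right numerator_le (by linarith)).trans ?_
      rw [div_le_div_iff₀ (by linarith) (by linarith)]
      nlinarith
    rw [pochhammerRatio_succ, pochhammerRatio_succ, abs_mul]
    exact mul_le_mul ih factor_le (abs_nonneg _) ((abs_nonneg _).trans ih)

lemma tendsto_add_natCast_div_add_natCast (b c : ℝ) :
    Tendsto (fun n : ℕ => (b + n) / (c + n)) atTop (𝓝 1) := by
  simpa using tendsto_add_mul_div_add_mul_atTop_nhds b c (1 : ℝ) one_ne_zero

lemma summable_pochhammerRatio_mul_pow (b c : ℝ) {x : ℝ} (hx : |x| < 1) :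
    Summable fun r : ℕ => pochhammerRatio b c r * x ^ r := by
  obtain ⟨ρ, hxρ, hρ⟩ := exists_between hx
  refine summable_of_ratio_norm_eventually_le hρ ?_
  have ratio_tendsto : Tendsto (fun r : ℕ => |(b + r) / (c + r) * x|) atTop (𝓝 |x|) := by
    simpa using ((tendsto_add_natCast_div_add_natCast b c).mul_const x).abs
  filter_upwards [ratio_tendsto.eventually_le_const hxρ] with r hr
  rw [pochhammerRatio_succ, pow_succ, mul_mul_mul_comm, norm_mul, mul_comm]
  exact mul_le_mul_of_nonneg_right hr (norm_nonneg _)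

lemma F21_one_left (b c x : ℝ) : F21 1 b c x = ∑' r : ℕ, pochhammerRatio b c r * x ^ r := by
  refine tsum_congr fun r => ?_
  rw [ascPochhammer_eval_one, mul_comm (r.factorial : ℝ),
    mul_div_mul_right _ _ (by exact_mod_cast r.factorial_ne_zero), pochhammerRatio]

lemma F21_one_left_eq_one_add (b c : ℝ) {x : ℝ} (hx : |x| < 1) :
    F21 1 b c x = 1 + b / c * x * F21 1 (b + 1) (c + 1) x := by
  rw [F21_one_left, F21_one_left, (summable_pochhammerRatio_mul_pow b c hx).tsum_eq_zero_add,
    ← tsum_mul_left]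
  simp only [pochhammerRatio_zero, pow_zero, mul_one, pochhammerRatio_succ_left, pow_succ]
  congr 2 with r
  ring

lemma one_sub_mul_F21_one_left {c : ℝ} (hc : ∀ n : ℕ, c ≠ -n) (b : ℝ) {x : ℝ} (hx : |x| < 1) :
    (1 - x) * F21 1 b c x = 1 - (c - b) / c * x * F21 1 b (c + 1) x := by
  have summable_c := summable_pochhammerRatio_mul_pow b c hx
  have summable_c_succ := summable_pochhammerRatio_mul_pow b (c + 1) hx
  have tail : ∑' r : ℕ, pochhammerRatio b c (r + 1) * x ^ (r + 1) =
      x * F21 1 b c x - (c - b) / c * x * F21 1 b (c + 1) x := by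
    rw [F21_one_left, F21_one_left, ← tsum_mul_left, ← tsum_mul_left,
      ← (summable_c.mul_left _).tsum_sub (summable_c_succ.mul_left _)]
    refine tsum_congr fun r => ?_
    have hc0 : c ≠ 0 := by simpa using hc 0
    have hcr : c + r ≠ 0 := fun h => hc r (eq_neg_of_add_eq_zero_left h)
    rw [pochhammerRatio_succ, pochhammerRatio_add_one_right hc0]
    field_simp
    ring
  have head_tail : F21 1 b c x = 1 + ∑' r : ℕ, pochhammerRatio b c (r + 1) * x ^ (r + 1) := by
    rw [F21_one_left, summable_c.tsum_eq_zero_add, pochhammerRatio_zero, pow_zero, mul_one]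
  linear_combination head_tail + tail

lemma F21_one_left_contiguous_middle {c : ℝ} (hc : ∀ n : ℕ, c ≠ -n) (b : ℝ) {x : ℝ}
    (hx : |x| < 1) :
    (c - 1 - b) * F21 1 b c x + b * (1 - x) * F21 1 (b + 1) c x = c - 1 := by
  have hc0 : c ≠ 0 := by simpa using hc 0
  have raise_both := F21_one_left_eq_one_add b c hx
  have raise_lower := one_sub_mul_F21_one_left hc (b + 1) hx
  rw [raise_both, mul_assoc b, raise_lower]
  field_simp
  ring

lemma abs_F21_one_left_le {b c k x : ℝ} (hc : 1 ≤ c) (hk : 0 ≤ k) (hb : |b| ≤ c + k)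
    (hx : |x| < 1) : |F21 1 b c x| ≤ F21 1 (1 + k) 1 |x| := by
  rw [F21_one_left, F21_one_left]
  have majorant_summable : Summable fun r : ℕ => pochhammerRatio (1 + k) 1 r * |x| ^ r :=
    summable_pochhammerRatio_mul_pow _ _ (by rwa [abs_abs])
  refine tsum_of_norm_bounded (E := ℝ) majorant_summable.hasSum fun r => ?_
  rw [norm_mul, norm_pow]
  exact mul_le_mul_of_nonneg_right (abs_pochhammerRatio_le hc hk hb r) (by positivity)

lemma eq_zero_of_eq_mul_succ {𝕜 : Type*} [NormedField 𝕜] {a d : ℕ → 𝕜} {l : 𝕜} {M : ℝ}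
    (ha : Tendsto a atTop (𝓝 l)) (hl : ‖l‖ < 1) (hd : ∀ n, d n = a n * d (n + 1))
    (hM : ∀ᶠ n in atTop, ‖d n‖ ≤ M) (n : ℕ) : d n = 0 := by
  obtain ⟨ρ, hlρ, hρ⟩ := exists_between hl
  have hρ0 : 0 ≤ ρ := (norm_nonneg l).trans hlρ.le
  obtain ⟨N, hN⟩ := eventually_atTop.mp (hM.and (ha.norm.eventually_le_const hlρ))
  have norm_le (k : ℕ) : ∀ m ≥ N, ‖d m‖ ≤ ρ ^ k * M := by
    induction k with
    | zero => simpa using fun m hm => (hN m hm).1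
    | succ k ih =>
      intro m hm
      calc ‖d m‖ = ‖a m‖ * ‖d (m + 1)‖ := by rw [hd m, norm_mul]
        _ ≤ ρ * (ρ ^ k * M) := mul_le_mul (hN m hm).2 (ih _ (by lia)) (norm_nonneg _) hρ0
        _ = ρ ^ (k + 1) * M := by ring
  have eventually_zero (m : ℕ) (hm : N ≤ m) : d m = 0 := by
    have bound_tendsto : Tendsto (fun k => ρ ^ k * M) atTop (𝓝 0) := by
      simpa using (tendsto_pow_atTop_nhds_zero_of_lt_one hρ0 hρ).mul_const M
    exact norm_le_zero_iff.mp (ge_of_tendsto' bound_tendsto fun k => norm_le k m hm)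
  rcases le_total N n with hn | hn
  · exact eventually_zero n hn
  · induction hn using Nat.decreasingInduction with
    | self => exact eventually_zero N le_rfl
    | of_succ m _ ih => rw [hd m, ih, mul_zero]

lemma add_natCast_ne_neg_natCast {c : ℝ} (hc : ∀ n : ℕ, c ≠ -n) (m n : ℕ) : c + m ≠ -n :=
  fun h => hc (n + m) (by push_cast; linarith)

lemma F21_one_left_pfaff {c x : ℝ} (hc : ∀ n : ℕ, c ≠ -n) (b : ℝ) (hx : |x| < 1)
    (hx' : |x / (x - 1)| < 1) : F21 1 (c - b) c (x / (x - 1)) = (1 - x) * F21 1 b c x := by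
  set w := x / (x - 1) with hw
  let d (n : ℕ) : ℝ := (1 - x) * F21 1 b (c + n) x - F21 1 (c + n - b) (c + n) w
  have recurrence (n : ℕ) : d n = (c - b + n) / (c + n) * w * d (n + 1) := by
    have hw_mul : w * (1 - x) = -x := by
      have : x - 1 ≠ 0 := by linarith [(abs_lt.mp hx).2]
      rw [hw]
      field_simp
      ring
    have left := one_sub_mul_F21_one_left (add_natCast_ne_neg_natCast hc n) b hx
    have right := F21_one_left_eq_one_add (c + n - b) (c + n) hx'
    simp only [d]
    rw [left, right]
    push_cast
    rw [← add_assoc c, show c + n - b + 1 = c + n + 1 - b by ring]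
    linear_combination (-((c + n - b) / (c + n)) * F21 1 b (c + n + 1) x) * hw_mul
  have bounded : ∀ᶠ n in atTop, ‖d n‖ ≤
      |1 - x| * F21 1 (1 + |b|) 1 |x| + F21 1 (1 + |b|) 1 |w| := by
    filter_upwards [tendsto_natCast_atTop_atTop.eventually_ge_atTop (1 - c)] with n hn
    refine (norm_sub_le _ _).trans (add_le_add ?_ ?_)
    · rw [norm_mul]
      exact mul_le_mul_of_nonneg_left (abs_F21_one_left_le (by linarith) (abs_nonneg b)
        (by linarith) hx) (abs_nonneg _)
    · refine abs_F21_one_left_le (by linarith) (abs_nonneg b) ((abs_sub _ _).trans ?_) hx'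
      rw [abs_of_pos (by linarith)]
  have ratio_tendsto : Tendsto (fun n : ℕ => (c - b + n) / (c + n) * w) atTop (𝓝 w) := by
    simpa using (tendsto_add_natCast_div_add_natCast (c - b) c).mul_const w
  have d_zero : d 0 = 0 :=
    eq_zero_of_eq_mul_succ ratio_tendsto hx' recurrence bounded 0
  simpa [d] using (sub_eq_zero.mp d_zero).symm

/-- The incomplete beta function `B_x(p, q)`. It is meant for `0 < p` and `0 ≤ x < 1`, where the
integrand is integrable for every real `q`. -/
noncomputable def incompleteBeta (p q x : ℝ) : ℝ :=
  ∫ t in (0 : ℝ)..x, t ^ (p - 1) * (1 - t) ^ (q - 1)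

lemma intervalIntegrable_rpow_mul_one_sub_rpow {p x : ℝ} (hp : 0 < p) (q : ℝ) (hx : x < 1) :
    IntervalIntegrable (fun t : ℝ => t ^ (p - 1) * (1 - t) ^ (q - 1)) MeasureTheory.volume 0 x := by
  refine (intervalIntegral.intervalIntegrable_rpow' (by linarith)).mul_continuousOn ?_
  refine (continuousOn_const.sub continuousOn_id).rpow_const fun t ht => Or.inl ?_
  have ht_le : t ≤ max 0 x := ht.2
  have : max 0 x < 1 := max_lt one_pos hx
  exact (show 0 < 1 - t by linarith).ne'

section IncompleteBeta

variable {p x : ℝ}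

lemma incompleteBeta_nonneg (p q : ℝ) (hx0 : 0 ≤ x) (hx1 : x ≤ 1) : 0 ≤ incompleteBeta p q x :=
  intervalIntegral.integral_nonneg hx0 fun _ ht =>
    mul_nonneg (rpow_nonneg ht.1 _) (rpow_nonneg (by linarith [ht.2]) _)

lemma incompleteBeta_add_one_le (hp : 0 < p) (q : ℝ) (hx0 : 0 ≤ x) (hx1 : x < 1) :
    incompleteBeta (p + 1) q x ≤ x * incompleteBeta p q x := by
  rw [incompleteBeta, incompleteBeta, ← intervalIntegral.integral_const_mul]
  refine intervalIntegral.integral_mono_on_of_le_Ioo hx0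
    (intervalIntegrable_rpow_mul_one_sub_rpow (by linarith) q hx1)
    ((intervalIntegrable_rpow_mul_one_sub_rpow hp q hx1).const_mul x) fun t ht => ?_
  have weight_nonneg : 0 ≤ t ^ (p - 1) * (1 - t) ^ (q - 1) :=
    mul_nonneg (rpow_nonneg ht.1.le _) (rpow_nonneg (by linarith [ht.2]) _)
  calc t ^ (p + 1 - 1) * (1 - t) ^ (q - 1) = t * (t ^ (p - 1) * (1 - t) ^ (q - 1)) := by
        rw [add_sub_right_comm, rpow_add_one ht.1.ne']
        ring
    _ ≤ x * (t ^ (p - 1) * (1 - t) ^ (q - 1)) := mul_le_mul_of_nonneg_right ht.2.le weight_nonneg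

lemma incompleteBeta_add_natCast_le (hp : 0 < p) (q : ℝ) (hx0 : 0 ≤ x) (hx1 : x < 1) (n : ℕ) :
    incompleteBeta (p + n) q x ≤ x ^ n * incompleteBeta p q x := by
  induction n with
  | zero => simp
  | succ n ih =>
    calc incompleteBeta (p + (n + 1 : ℕ)) q x = incompleteBeta (p + n + 1) q x := by
          rw [Nat.cast_succ, add_assoc]
      _ ≤ x * incompleteBeta (p + n) q x := incompleteBeta_add_one_le (by positivity) q hx0 hx1
      _ ≤ x * (x ^ n * incompleteBeta p q x) := mul_le_mul_of_nonneg_left ih hx0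
      _ = x ^ (n + 1) * incompleteBeta p q x := by ring

lemma hasDerivAt_rpow_mul_one_sub_rpow (p q : ℝ) {t : ℝ} (ht0 : 0 < t) (ht1 : t < 1) :
    HasDerivAt (fun t : ℝ => t ^ p * (1 - t) ^ q)
      (p * (t ^ (p - 1) * (1 - t) ^ (q - 1)) - (p + q) * (t ^ (p + 1 - 1) * (1 - t) ^ (q - 1)))
      t := by
  have ht1' : 1 - t ≠ 0 := by linarith
  have deriv_left := hasDerivAt_rpow_const (p := p) (Or.inl ht0.ne')
  have deriv_right := ((hasDerivAt_id t).const_sub 1).rpow_const (p := q) (Or.inl ht1')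
  refine (deriv_left.mul deriv_right).congr_deriv ?_
  simp only [id_eq]
  rw [add_sub_cancel_right, rpow_sub_one ht0.ne', rpow_sub_one ht1']
  field_simp
  ring

lemma mul_incompleteBeta (hp : 0 < p) (q : ℝ) (hx0 : 0 ≤ x) (hx1 : x < 1) :
    p * incompleteBeta p q x = x ^ p * (1 - x) ^ q + (p + q) * incompleteBeta (p + 1) q x := by
  have integrable_p := intervalIntegrable_rpow_mul_one_sub_rpow hp q hx1
  have integrable_succ :=
    intervalIntegrable_rpow_mul_one_sub_rpow (show 0 < p + 1 by linarith) q hx1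
  have continuous : ContinuousOn (fun t : ℝ => t ^ p * (1 - t) ^ q) (Set.Icc 0 x) := by
    refine (continuousOn_id.rpow_const fun _ _ => Or.inr hp.le).mul ?_
    refine (continuousOn_const.sub continuousOn_id).rpow_const fun t ht => Or.inl ?_
    exact (show 0 < 1 - t by linarith [ht.2]).ne'
  have ftc := intervalIntegral.integral_eq_sub_of_hasDerivAt_of_le hx0 continuous
    (fun t ht => hasDerivAt_rpow_mul_one_sub_rpow p q ht.1 (ht.2.trans hx1))
    ((integrable_p.const_mul p).sub (integrable_succ.const_mul (p + q)))
  rw [intervalIntegral.integral_sub (integrable_p.const_mul p) (integrable_succ.const_mul (p + q)),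
    intervalIntegral.integral_const_mul, intervalIntegral.integral_const_mul,
    zero_rpow hp.ne', zero_mul, sub_zero] at ftc
  rw [incompleteBeta, incompleteBeta, ← ftc]
  ring

end IncompleteBeta

lemma integral_rpow_mul_one_sub_rpow_eq_beta {p q : ℝ} (hp : 0 < p) (hq : 0 < q) :
    ∫ t in (0 : ℝ)..1, t ^ (p - 1) * (1 - t) ^ (q - 1) = beta p q := by
  rw [ProbabilityTheory.beta_eq_betaIntegralReal p q hp hq, Complex.betaIntegral,
    ← Complex.ofReal_re (∫ t in (0 : ℝ)..1, t ^ (p - 1) * (1 - t) ^ (q - 1)),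
    ← intervalIntegral.integral_ofReal]
  congr 1
  refine intervalIntegral.integral_congr fun t ht => ?_
  rw [Set.uIcc_of_le zero_le_one] at ht
  push_cast [Complex.ofReal_cpow ht.1, Complex.ofReal_cpow (sub_nonneg.mpr ht.2)]
  rfl

lemma incompleteBeta_add_one_sub {p q x : ℝ} (hp : 0 < p) (hq : 0 < q)
    (hx0 : 0 < x) (hx1 : x < 1) :
    incompleteBeta p q x + incompleteBeta q p (1 - x) = beta p q := by
  have upper_eq : ∫ t in x..1, t ^ (p - 1) * (1 - t) ^ (q - 1) = incompleteBeta q p (1 - x) := by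
    simpa [incompleteBeta, mul_comm] using intervalIntegral.integral_comp_sub_left
      (fun t : ℝ => t ^ (q - 1) * (1 - t) ^ (p - 1)) 1 (a := x) (b := 1)
  have upper_integrable : IntervalIntegrable (fun t : ℝ => t ^ (p - 1) * (1 - t) ^ (q - 1))
      MeasureTheory.volume x 1 := by
    have hx1' : 1 - x < 1 := by linarith
    simpa [mul_comm] using
      ((intervalIntegrable_rpow_mul_one_sub_rpow hq p hx1').comp_sub_left 1).symm
  rw [← upper_eq, incompleteBeta, intervalIntegral.integral_add_adjacent_intervals
    (intervalIntegrable_rpow_mul_one_sub_rpow hp q hx1) upper_integrable,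
    integral_rpow_mul_one_sub_rpow_eq_beta hp hq]

/-- The hypergeometric expression for the incomplete beta function `B_x(p, q)`. It continues
`incompleteBeta p q x` to all real `p` outside `{0, -1, -2, …}`, where the integral may diverge. -/
noncomputable def betaSeries (p q x : ℝ) : ℝ :=
  x ^ p * (1 - x) ^ q / p * F21 1 (p + q) (p + 1) x

section BetaSeries

variable {p q x : ℝ}

lemma mul_betaSeries (hp : p ≠ 0) (q : ℝ) (hx0 : 0 < x) (hx1 : x < 1) :
    p * betaSeries p q x = x ^ p * (1 - x) ^ q + (p + q) * betaSeries (p + 1) q x := by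
  have hx : |x| < 1 := by rwa [abs_of_pos hx0]
  rw [betaSeries, betaSeries, ← mul_assoc, mul_div_cancel₀ _ hp,
    F21_one_left_eq_one_add (p + q) (p + 1) hx, rpow_add_one hx0.ne', add_right_comm p 1 q]
  ring

lemma mul_betaSeries_add (hp : ∀ n : ℕ, p ≠ -n) (q : ℝ) (hx0 : 0 < x) (hx1 : x < 1) :
    q * betaSeries p q x + x ^ p * (1 - x) ^ q = (p + q) * betaSeries p (q + 1) x := by
  have hp0 : p ≠ 0 := by simpa using hp 0
  have hp1 (n : ℕ) : p + 1 ≠ -n := by simpa using add_natCast_ne_neg_natCast hp 1 n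
  have contiguous := F21_one_left_contiguous_middle hp1 (p + q) (x := x) (by rwa [abs_of_pos hx0])
  rw [betaSeries, betaSeries, rpow_add_one (sub_pos.mpr hx1).ne', ← add_assoc]
  field_simp
  linear_combination -(1 - x) ^ q * contiguous

lemma abs_betaSeries_add_natCast_le (hp : 0 < p) (q : ℝ) (hx0 : 0 < x) (hx1 : x < 1) (n : ℕ) :
    |betaSeries (p + n) q x| ≤ x ^ n * (x ^ p * (1 - x) ^ q / p * F21 1 (1 + |q|) 1 |x|) := by
  have : (0 : ℝ) ≤ n := n.cast_nonneg
  have : 0 < 1 - x := sub_pos.mpr hx1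
  have parameter_le : |p + n + q| ≤ p + n + 1 + |q| := by
    have := abs_add_le (p + n) q
    rw [abs_of_pos (show 0 < p + n by linarith)] at this
    linarith
  have F21_le := abs_F21_one_left_le (x := x) (show 1 ≤ p + n + 1 by linarith) (abs_nonneg q)
    parameter_le (by rwa [abs_of_pos hx0])
  calc |betaSeries (p + n) q x|
      = x ^ n * (x ^ p * (1 - x) ^ q / (p + n)) * |F21 1 (p + n + q) (p + n + 1) x| := by
        rw [betaSeries, abs_mul, abs_of_pos (by positivity), rpow_add_natCast hx0.ne']
        ring
    _ ≤ x ^ n * (x ^ p * (1 - x) ^ q / p) * F21 1 (1 + |q|) 1 |x| := by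
        gcongr
        linarith
    _ = x ^ n * (x ^ p * (1 - x) ^ q / p * F21 1 (1 + |q|) 1 |x|) := by ring

lemma incompleteBeta_eq_betaSeries (hp : 0 < p) (q : ℝ) (hx0 : 0 < x) (hx1 : x < 1) :
    incompleteBeta p q x = betaSeries p q x := by
  let d (n : ℕ) : ℝ := (incompleteBeta (p + n) q x - betaSeries (p + n) q x) / x ^ n
  have recurrence (n : ℕ) : d n = (p + q + n) / (p + n) * x * d (n + 1) := by
    have hpn : 0 < p + n := by positivity
    have incompleteBeta_step := mul_incompleteBeta hpn q hx0.le hx1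
    have betaSeries_step := mul_betaSeries hpn.ne' q hx0 hx1
    simp only [d, Nat.cast_succ, ← add_assoc]
    field_simp
    linear_combination x * x ^ n * (incompleteBeta_step - betaSeries_step)
  have bounded (n : ℕ) : ‖d n‖ ≤
      incompleteBeta p q x + x ^ p * (1 - x) ^ q / p * F21 1 (1 + |q|) 1 |x| := by
    have incompleteBeta_le : |incompleteBeta (p + n) q x| ≤ x ^ n * incompleteBeta p q x := by
      rw [abs_of_nonneg (incompleteBeta_nonneg _ q hx0.le hx1.le)]
      exact incompleteBeta_add_natCast_le hp q hx0.le hx1 n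
    rw [norm_div, norm_of_nonneg (pow_nonneg hx0.le n), div_le_iff₀' (pow_pos hx0 n), mul_add]
    exact (abs_sub _ _).trans
      (add_le_add incompleteBeta_le (abs_betaSeries_add_natCast_le hp q hx0 hx1 n))
  have ratio_tendsto : Tendsto (fun n : ℕ => (p + q + n) / (p + n) * x) atTop (𝓝 x) := by
    simpa using (tendsto_add_natCast_div_add_natCast (p + q) p).mul_const x
  have d_zero : d 0 = 0 := eq_zero_of_eq_mul_succ ratio_tendsto
    (by rwa [norm_of_nonneg hx0.le]) recurrence (Eventually.of_forall bounded) 0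
  simpa [d, sub_eq_zero] using d_zero

-- At `p + q = 0` this relies on the convention `Gamma 0 = 0`, in agreement with `1 / Γ(0) = 0`.
lemma mul_beta (p : ℝ) (hq : q ≠ 0) : q * beta p q = (p + q) * beta p (q + 1) := by
  rw [beta, beta, Gamma_add_one hq, ← add_assoc]
  rcases eq_or_ne (p + q) 0 with hpq | hpq
  · simp [hpq]
  · rw [Gamma_add_one hpq]
    field_simp

lemma betaSeries_add_one_sub_of_add_one (hp : ∀ n : ℕ, p ≠ -n) (hq : q ≠ 0)
    (hx0 : 0 < x) (hx1 : x < 1)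
    (h : betaSeries p (q + 1) x + betaSeries (q + 1) p (1 - x) = beta p (q + 1)) :
    betaSeries p q x + betaSeries q p (1 - x) = beta p q := by
  have left_step := mul_betaSeries_add hp q hx0 hx1
  have right_step := mul_betaSeries hq p (sub_pos.mpr hx1) (sub_lt_self 1 hx0)
  rw [sub_sub_cancel] at right_step
  refine mul_left_cancel₀ hq ?_
  rw [mul_beta p hq, ← h]
  linear_combination left_step + right_step

lemma betaSeries_add_one_sub_of_forall_pos (hp : ∀ n : ℕ, p ≠ -n) (hx0 : 0 < x) (hx1 : x < 1)
    (h : ∀ q > 0, betaSeries p q x + betaSeries q p (1 - x) = beta p q) (hq : ∀ n : ℕ, q ≠ -n) :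
    betaSeries p q x + betaSeries q p (1 - x) = beta p q := by
  obtain ⟨N, hN⟩ := exists_nat_gt (-q)
  induction N generalizing q with
  | zero => exact h q (by simpa using hN)
  | succ N ih =>
    have hq_succ (n : ℕ) : q + 1 ≠ -n := by simpa using add_natCast_ne_neg_natCast hq 1 n
    push_cast at hN
    exact betaSeries_add_one_sub_of_add_one hp (by simpa using hq 0) hx0 hx1
      (ih hq_succ (by linarith))

theorem betaSeries_add_one_sub (hp : ∀ n : ℕ, p ≠ -n) (hq : ∀ n : ℕ, q ≠ -n)
    (hx0 : 0 < x) (hx1 : x < 1) :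
    betaSeries p q x + betaSeries q p (1 - x) = beta p q := by
  have hx0' : 0 < 1 - x := sub_pos.mpr hx1
  have hx1' : 1 - x < 1 := sub_lt_self 1 hx0
  have of_pos {p q : ℝ} (hp : 0 < p) (hq : 0 < q) :
      betaSeries p q x + betaSeries q p (1 - x) = beta p q := by
    rw [← incompleteBeta_eq_betaSeries hp q hx0 hx1, ← incompleteBeta_eq_betaSeries hq p hx0' hx1',
      incompleteBeta_add_one_sub hp hq hx0 hx1]
  have beta_comm (p q : ℝ) : beta p q = beta q p := by
    rw [beta, beta, mul_comm, add_comm]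
  refine betaSeries_add_one_sub_of_forall_pos hp hx0 hx1 (fun q hq => ?_) hq
  have hq_ne (n : ℕ) : q ≠ -n := by linarith [n.cast_nonneg (α := ℝ)]
  have swapped := betaSeries_add_one_sub_of_forall_pos hq_ne hx0' hx1'
    (fun p hp => by rw [sub_sub_cancel, add_comm, of_pos hp hq, beta_comm]) hp
  rwa [sub_sub_cancel, add_comm, beta_comm] at swapped

lemma betaSeries_one_div_one_add (p q : ℝ) {z : ℝ} (hz : 0 < z) :
    betaSeries p q (1 / (1 + z)) =
      z ^ q / (1 + z) ^ (p + q) / p * F21 1 (p + q) (p + 1) (1 / (1 + z)) := by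
  have hz1 : 0 < 1 + z := by linarith
  have one_sub_eq : 1 - 1 / (1 + z) = z / (1 + z) := by field_simp; ring
  rw [betaSeries, one_sub_eq, div_rpow zero_le_one hz1.le, one_rpow, div_rpow hz.le hz1.le,
    rpow_add hz1]
  ring

lemma betaSeries_div_one_add (hp : ∀ n : ℕ, p ≠ -n) (q : ℝ) {z : ℝ} (hz0 : 0 < z) (hz1 : z < 1) :
    betaSeries p q (z / (1 + z)) =
      z ^ p * (1 + z) ^ (1 - (p + q)) / p * F21 1 (1 - q) (p + 1) (-z) := by
  have hz : 0 < 1 + z := by linarith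
  have one_sub_eq : 1 - z / (1 + z) = 1 / (1 + z) := by field_simp; ring
  have pfaff_argument : z / (1 + z) / (z / (1 + z) - 1) = -z := by
    rw [← neg_sub, one_sub_eq]
    field_simp
  have pfaff := F21_one_left_pfaff (c := p + 1) (x := z / (1 + z))
    (fun n => by simpa using add_natCast_ne_neg_natCast hp 1 n) (p + q)
    (by rw [abs_of_pos (by positivity), div_lt_one hz]; linarith)
    (by rwa [pfaff_argument, abs_neg, abs_of_pos hz0])
  rw [pfaff_argument, add_sub_add_left_eq_sub, one_sub_eq] at pfaff
  rw [pfaff, betaSeries, one_sub_eq, div_rpow hz0.le hz.le, div_rpow zero_le_one hz.le, one_rpow,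
    rpow_sub hz, rpow_one, rpow_add hz]
  field_simp

end BetaSeries

lemma cos_pi_mul_ne_zero {β : ℝ} (hβ : ∀ n : ℤ, β ≠ n + 1 / 2) : cos (π * β) ≠ 0 := by
  refine cos_ne_zero_iff.mpr fun k hk => hβ k ?_
  exact mul_left_cancel₀ pi_ne_zero (by linarith)

lemma Gamma_mul_Gamma_half_sub {β : ℝ} (hβ : ∀ n : ℕ, β ≠ -n) (hβ' : ∀ n : ℤ, β ≠ n + 1 / 2) :
    Gamma β * Gamma (1 / 2 - β) / √π =
      2 ^ (2 * β - 1) * (Gamma β ^ 2 / Gamma (2 * β)) * (1 / cos (π * β)) := by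
  have hcos := cos_pi_mul_ne_zero hβ'
  have duplication :
      Gamma β * Gamma (β + 1 / 2) * 2 ^ (2 * β - 1) = Gamma (2 * β) * √π := by
    have two_rpow_ne_zero : (2 : ℝ) ^ (2 * β - 1) ≠ 0 := (rpow_pos_of_pos two_pos _).ne'
    rw [Gamma_mul_Gamma_add_half, ← neg_sub (2 * β) 1, rpow_neg zero_le_two, mul_right_comm,
      inv_mul_cancel_right₀ two_rpow_ne_zero]
  have reflection : Gamma (β + 1 / 2) * Gamma (1 / 2 - β) * cos (π * β) = π := by
    have h := Gamma_mul_Gamma_one_sub (β + 1 / 2)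
    rwa [show 1 - (β + 1 / 2) = 1 / 2 - β by ring, show π * (β + 1 / 2) = π * β + π / 2 by ring,
      sin_add_pi_div_two, eq_div_iff hcos] at h
  have hGamma_half : Gamma (β + 1 / 2) ≠ 0 :=
    Gamma_ne_zero fun n hn => hβ' (-n - 1) (by push_cast; linarith)
  have hGamma_two : Gamma (2 * β) ≠ 0 := left_ne_zero_of_mul <| duplication.symm.trans_ne <|
    mul_ne_zero (mul_ne_zero (Gamma_ne_zero hβ) hGamma_half) (rpow_pos_of_pos two_pos _).ne'
  have sqrt_pi_sq : √π * √π = π := mul_self_sqrt pi_pos.le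
  rw [mul_one_div, ← mul_div_assoc, div_div,
    div_eq_div_iff (by positivity) (mul_ne_zero hGamma_two hcos)]
  refine mul_left_cancel₀ hGamma_half ?_
  linear_combination Gamma β * Gamma (2 * β) * (reflection - sqrt_pi_sq) -
    Gamma β * √π * duplication

theorem hypergeom_identity_nonhalfinteger_general {β ζ : ℝ} (hβ : ∀ n : ℕ, β ≠ -n)
    (hβ' : ∀ n : ℤ, β ≠ n + 1 / 2) (h0 : 0 < ζ) (h1 : ζ < 1) :
    1 / (β - 1 / 2) * √(ζ * (1 + ζ)) * F21 1 (1 - β) (3 / 2 - β) (-ζ) +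
      2 ^ (2 * β - 1) * (Gamma β ^ 2 / Gamma (2 * β)) * ζ ^ β * (1 / cos (π * β)) =
    1 / β * √(ζ / (1 + ζ)) * F21 1 (1 / 2) (β + 1) (1 / (1 + ζ)) := by
  have hβ_half (n : ℕ) : 1 / 2 - β ≠ -n := fun hn => hβ' n (by push_cast; linarith)
  have hζ : 0 < 1 + ζ := by linarith
  have one_sub_eq : 1 - 1 / (1 + ζ) = ζ / (1 + ζ) := by field_simp; ring
  have connection := betaSeries_add_one_sub hβ hβ_half (x := 1 / (1 + ζ)) (by positivity)
    ((div_lt_one hζ).mpr (by linarith))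
  rw [one_sub_eq, betaSeries_one_div_one_add _ _ h0, betaSeries_div_one_add hβ_half _ h0 h1, beta,
    add_sub_cancel, sub_add_cancel, Gamma_one_half_eq, Gamma_mul_Gamma_half_sub hβ hβ',
    show (1 : ℝ) - 1 / 2 = 1 / 2 by norm_num, show 1 / 2 - β + 1 = 3 / 2 - β by ring,
    ← sqrt_eq_rpow] at connection
  have rpow_mul_rpow : ζ ^ β * ζ ^ (1 / 2 - β) = √ζ := by
    rw [← rpow_add h0, add_sub_cancel, sqrt_eq_rpow]
  rw [sqrt_mul h0.le, sqrt_div h0.le, ← rpow_mul_rpow, ← neg_sub (1 / 2) β,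
    one_div_neg_eq_neg_one_div]
  linear_combination -ζ ^ β * connection

lemma ne_intCast_add_half_of_half_lt {β : ℝ} (hβ : 1 / 2 < β)
    (hβ' : ∀ n : ℕ, 1 ≤ n → β ≠ n + 1 / 2) (n : ℤ) : β ≠ n + 1 / 2 := by
  intro h
  have hn : 0 < n := by exact_mod_cast (show (0 : ℝ) < n by linarith)
  lift n to ℕ using hn.le
  exact hβ' n (by exact_mod_cast hn) (by simpa using h)

/-- For `β > 1/2` which is not of the form `n + 1/2` with
`n ≥ 1`, and `0 < ζ < 1`, the two representations of `f` agree: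
`(1/(β−1/2))·√(ζ(1+ζ))·₂F₁(1,1−β;3/2−β;−ζ) + 2^{2β−1}(Γ(β)²/Γ(2β))·ζ^β·sec(πβ)
  = (1/β)·√(ζ/(1+ζ))·₂F₁(1,1/2;β+1;1/(1+ζ))`. -/
theorem hypergeom_identity_nonhalfinteger
    (β : ℝ) (hβ : 1/2 < β) (hβ' : ∀ n : ℕ, 1 ≤ n → β ≠ (n : ℝ) + 1/2)
    (ζ : ℝ) (h0 : 0 < ζ) (h1 : ζ < 1) :
    (1 / (β - 1/2)) * Real.sqrt (ζ * (1 + ζ)) * F21 1 (1 - β) (3/2 - β) (-ζ) +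
      (2:ℝ) ^ (2 * β - 1) * (Real.Gamma β ^ 2 / Real.Gamma (2 * β)) * ζ ^ β *
        (1 / Real.cos (π * β)) =
    (1 / β) * Real.sqrt (ζ / (1 + ζ)) * F21 1 (1/2) (β + 1) (1 / (1 + ζ)) := by
  have hβ_ne (n : ℕ) : β ≠ -n := by linarith [n.cast_nonneg (α := ℝ)]
  have hβ_ne_half := ne_intCast_add_half_of_half_lt hβ hβ'
  exact hypergeom_identity_nonhalfinteger_general hβ_ne hβ_ne_half h0 h1
end

section
/- Let (P_n) be the orthonormal polynomials for the Laguerre weight exp(−x) on [0,∞) as in the context. Then for every fixed real t < 0, lim_{N→∞} P_N(t) / [ (−1)^N (2√π)^{−1} (−tN)^{−1/4} exp(2√(−tN) + t/2) ] = 1. -/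
open MeasureTheory Real Filter Topology Polynomial

/-!
Orthonormality determines the polynomials, so `Pₙ = (-1)ⁿ Lₙ` with `Lₙ` the classical Laguerre
polynomial. For `s = -t > 0`, Cauchy's formula gives `Lₙ(-s)` as the average of `(1 + s/z)ⁿ eᶻ`
over any circle around `0`. The saddle point lies near `|z| = √(sn)`, and on this circle
`n s/z = conj z`, so with `w = s/z` the integrand is `exp (2 re z)` times `(1 + w)ⁿ exp (-n w)`.
The second factor is bounded and tends to `exp (-s/2)` near the positive real axis, where the first
one concentrates, and Laplace's method yields the asymptotics.
-/

section OrthonormalPolynomials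

variable {K : Type*} [Field K] [LinearOrder K]

/-- The sequence of orthonormal polynomials of a moment functional `L`, that is, of the bilinear
form `(p, q) ↦ L (p * q)`. -/
structure IsOrthonormalSequence (L : K[X] →ₗ[K] K) (P : ℕ → K[X]) : Prop where
  natDegree_eq : ∀ n, (P n).natDegree = n
  leadingCoeff_pos : ∀ n, 0 < (P n).leadingCoeff
  map_mul : ∀ m n, L (P m * P n) = if m = n then 1 else 0

namespace IsOrthonormalSequence

variable {L : K[X] →ₗ[K] K} {P Q : ℕ → K[X]}

lemma degree_eq (hP : IsOrthonormalSequence L P) (n : ℕ) : (P n).degree = n := by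
  have hne : P n ≠ 0 := leadingCoeff_ne_zero.mp (hP.leadingCoeff_pos n).ne'
  rw [degree_eq_natDegree hne, hP.natDegree_eq]

lemma coeff_self_pos (hP : IsOrthonormalSequence L P) (n : ℕ) : 0 < (P n).coeff n := by
  simpa only [leadingCoeff, hP.natDegree_eq] using hP.leadingCoeff_pos n

lemma eq_sum_of_degree_lt (hP : IsOrthonormalSequence L P) {n : ℕ} {p : K[X]}
    (hp : p.degree < n) : p = ∑ k ∈ Finset.range n, L (p * P k) • P k := by
  induction n generalizing p with
  | zero => simpa using hp
  | succ n ih =>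
    set a := p.coeff n / (P n).coeff n
    have hdeg : (p - a • P n).degree < n := by
      rw [degree_lt_iff_coeff_zero] at hp ⊢
      intro m hm
      rcases hm.eq_or_lt with rfl | hm
      · simp [a, (hP.coeff_self_pos n).ne']
      · have hPm : (P n).coeff m = 0 :=
          coeff_eq_zero_of_natDegree_lt ((hP.natDegree_eq n).trans_lt hm)
        simp [hp m hm, hPm]
    have hcoeff (k : ℕ) : L ((p - a • P n) * P k) = L (p * P k) - if n = k then a else 0 := by
      simp [sub_mul, hP.map_mul]
    have hexp : p - a • P n = ∑ k ∈ Finset.range n, L (p * P k) • P k := by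
      refine (ih hdeg).trans (Finset.sum_congr rfl fun k hk => ?_)
      rw [hcoeff, if_neg (Finset.mem_range.mp hk).ne', sub_zero]
    have ha : L (p * P n) = a := by
      have hzero : L ((p - a • P n) * P n) = 0 := by
        rw [hexp, Finset.sum_mul, map_sum]
        refine Finset.sum_eq_zero fun k hk => ?_
        simp [hP.map_mul, (Finset.mem_range.mp hk).ne]
      simpa [hcoeff, sub_eq_zero] using hzero
    rw [Finset.sum_range_succ, ← hexp, ha, sub_add_cancel]

lemma map_mul_eq_zero_of_degree_lt (hP : IsOrthonormalSequence L P) {n : ℕ} {p : K[X]}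
    (hp : p.degree < n) : L (p * P n) = 0 := by
  rw [hP.eq_sum_of_degree_lt hp, Finset.sum_mul, map_sum]
  refine Finset.sum_eq_zero fun k hk => ?_
  simp [hP.map_mul, (Finset.mem_range.mp hk).ne]

lemma eq_smul (hP : IsOrthonormalSequence L P) (hQ : IsOrthonormalSequence L Q) (n : ℕ) :
    Q n = L (Q n * P n) • P n := by
  have hdeg : (Q n).degree < (n + 1 : ℕ) := by
    rw [hQ.degree_eq]
    exact_mod_cast n.lt_succ_self
  have hlower : ∑ k ∈ Finset.range n, L (Q n * P k) • P k = 0 := by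
    refine Finset.sum_eq_zero fun k hk => ?_
    have hPk : (P k).degree < n := by
      rw [hP.degree_eq]
      exact_mod_cast Finset.mem_range.mp hk
    rw [mul_comm, hQ.map_mul_eq_zero_of_degree_lt hPk, zero_smul]
  simpa only [Finset.sum_range_succ, hlower, zero_add] using hP.eq_sum_of_degree_lt hdeg

theorem unique [IsStrictOrderedRing K] (hP : IsOrthonormalSequence L P)
    (hQ : IsOrthonormalSequence L Q) : P = Q := by
  funext n
  have hQn : Q n = L (Q n * P n) • P n := hP.eq_smul hQ n
  set c := L (Q n * P n)
  have hpos : 0 < c := by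
    have hcoeff : (Q n).coeff n = c * (P n).coeff n := by
      simpa using congrArg (coeff · n) hQn
    exact pos_of_mul_pos_left (hcoeff ▸ hQ.coeff_self_pos n) (hP.coeff_self_pos n).le
  have hsq : c * c = 1 := by
    simpa [hQn, hP.map_mul] using hQ.map_mul n n
  have hc : c = 1 := (mul_self_eq_one_iff.mp hsq).resolve_right (by linarith)
  rw [hQn, hc, one_smul]

end IsOrthonormalSequence

end OrthonormalPolynomials

section LaguerrePolynomials

lemma neg_one_pow_mul_self {R : Type*} [Ring R] (n : ℕ) : (-1 : R) ^ n * (-1) ^ n = 1 := by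
  rw [← pow_add, Even.neg_one_pow ⟨n, rfl⟩]

lemma integrableOn_pow_mul_exp_neg_Ioi (k : ℕ) :
    IntegrableOn (fun x : ℝ => x ^ k * exp (-x)) (Set.Ioi 0) := by
  refine (GammaIntegral_convergent (s := k + 1) (by positivity)).congr_fun (fun x _ => ?_)
    measurableSet_Ioi
  simp [mul_comm]

lemma integral_pow_mul_exp_neg_Ioi (k : ℕ) :
    ∫ x in Set.Ioi (0 : ℝ), x ^ k * exp (-x) = k.factorial := by
  rw [← Gamma_nat_eq_factorial, Gamma_eq_integral (by positivity)]
  simp [mul_comm]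

lemma integrableOn_eval_mul_exp_neg_Ioi (p : ℝ[X]) :
    IntegrableOn (fun x : ℝ => p.eval x * exp (-x)) (Set.Ioi 0) := by
  induction p using Polynomial.induction_on' with
  | add p q hp hq =>
    simp only [eval_add, add_mul]
    exact Integrable.add hp hq
  | monomial n a =>
    simp only [eval_monomial, mul_assoc]
    exact (integrableOn_pow_mul_exp_neg_Ioi n).const_mul a

/-- The moment functional `p ↦ ∫₀^∞ p(x) e⁻ˣ dx` of the Laguerre weight. -/
noncomputable def laguerreFunctional : ℝ[X] →ₗ[ℝ] ℝ where
  toFun p := ∫ x in Set.Ioi (0 : ℝ), p.eval x * exp (-x)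
  map_add' p q := by
    simpa only [eval_add, add_mul] using integral_add (integrableOn_eval_mul_exp_neg_Ioi p)
      (integrableOn_eval_mul_exp_neg_Ioi q)
  map_smul' c p := by simp [mul_assoc, integral_const_mul]

lemma laguerreFunctional_apply (p : ℝ[X]) :
    laguerreFunctional p = ∫ x in Set.Ioi (0 : ℝ), p.eval x * exp (-x) :=
  rfl

lemma laguerreFunctional_X_pow (k : ℕ) : laguerreFunctional (X ^ k) = k.factorial := by
  simpa [laguerreFunctional_apply] using integral_pow_mul_exp_neg_Ioi k

/-- The classical Laguerre polynomial `Lₙ`, normalized by `Lₙ(0) = 1`; its leading coefficient has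
sign `(-1)ⁿ`. -/
noncomputable def laguerre (n : ℕ) : ℝ[X] :=
  ∑ k ∈ Finset.range (n + 1), monomial k ((-1 : ℝ) ^ k * n.choose k / k.factorial)

lemma coeff_laguerre (n k : ℕ) :
    (laguerre n).coeff k = (-1) ^ k * n.choose k / k.factorial := by
  rw [laguerre, finsetSum_coeff]
  simp only [coeff_monomial, Finset.sum_ite_eq', Finset.mem_range, ite_eq_left_iff, not_lt]
  intro hk
  simp [Nat.choose_eq_zero_of_lt hk]

lemma natDegree_laguerre (n : ℕ) : (laguerre n).natDegree = n := by
  refine natDegree_eq_of_le_of_coeff_ne_zero (natDegree_le_iff_coeff_eq_zero.mpr fun k hk => ?_) ?_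
  · simp [coeff_laguerre, Nat.choose_eq_zero_of_lt hk]
  · simp [coeff_laguerre, Nat.factorial_ne_zero]

lemma eval_neg_laguerre (n : ℕ) (s : ℝ) :
    (laguerre n).eval (-s) = ∑ k ∈ Finset.range (n + 1), n.choose k * s ^ k / k.factorial := by
  rw [laguerre, eval_finsetSum]
  refine Finset.sum_congr rfl fun k _ => ?_
  rw [eval_monomial, neg_pow]
  linear_combination (n.choose k * s ^ k / k.factorial : ℝ) * neg_one_pow_mul_self (R := ℝ) k

/-- Since `L(X^(m+k)) = (m+k)!` and `(m+k)!/k!` is the rising factorial `(k+1)⋯(k+m)`, a moment of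
`Lₙ` is an alternating binomial sum of values of a polynomial of degree `m`. -/
lemma laguerreFunctional_X_pow_mul_laguerre (m n : ℕ) :
    laguerreFunctional (X ^ m * laguerre n) =
      (-1) ^ n * (fwdDiff (1 : ℝ))^[n] (ascPochhammer ℝ m).eval 1 := by
  rw [fwdDiff_iter_eq_sum_shift, laguerre, Finset.mul_sum, map_sum, Finset.mul_sum]
  refine Finset.sum_congr rfl fun k hk => ?_
  have hmul : X ^ m * monomial k ((-1 : ℝ) ^ k * n.choose k / k.factorial) =
      ((-1 : ℝ) ^ k * n.choose k / k.factorial) • X ^ (k + m) := by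
    rw [← C_mul_X_pow_eq_monomial, smul_eq_C_mul]
    ring
  have hsign : (-1 : ℝ) ^ n * (-1) ^ (n - k) = (-1) ^ k := by
    obtain ⟨j, rfl⟩ := Nat.exists_eq_add_of_le (Finset.mem_range_succ_iff.mp hk)
    rw [Nat.add_sub_cancel_left, pow_add, mul_assoc, neg_one_pow_mul_self, mul_one]
  rw [hmul, map_smul, laguerreFunctional_X_pow, ← factorial_mul_ascPochhammer ℝ k m, ← hsign]
  simp only [smul_eq_mul, zsmul_eq_mul, nsmul_eq_mul, mul_one, add_comm (1 : ℝ)]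
  push_cast
  field_simp

lemma laguerreFunctional_X_pow_mul_laguerre_of_lt {m n : ℕ} (h : m < n) :
    laguerreFunctional (X ^ m * laguerre n) = 0 := by
  rw [laguerreFunctional_X_pow_mul_laguerre,
    Polynomial.fwdDiff_iter_eq_zero_of_degree_lt (by simpa using h)]
  simp

lemma laguerreFunctional_X_pow_mul_laguerre_self (n : ℕ) :
    laguerreFunctional (X ^ n * laguerre n) = (-1) ^ n * n.factorial := by
  have hdiff := Polynomial.fwdDiff_iter_degree_eq_factorial (ascPochhammer ℝ n)
  rw [ascPochhammer_natDegree, (monic_ascPochhammer ℝ n).leadingCoeff] at hdiff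
  rw [laguerreFunctional_X_pow_mul_laguerre, hdiff]
  simp

lemma laguerreFunctional_mul_laguerre_of_natDegree_le {n : ℕ} {p : ℝ[X]} (hp : p.natDegree ≤ n) :
    laguerreFunctional (p * laguerre n) = (-1) ^ n * n.factorial * p.coeff n := by
  have hterm (k : ℕ) : laguerreFunctional (monomial k (p.coeff k) * laguerre n) =
      p.coeff k * laguerreFunctional (X ^ k * laguerre n) := by
    rw [← smul_X_eq_monomial, smul_mul_assoc, map_smul, smul_eq_mul]
  conv_lhs => rw [p.as_sum_range' (n + 1) (Nat.lt_succ_of_le hp)]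
  rw [Finset.sum_mul, map_sum, Finset.sum_range_succ, Finset.sum_eq_zero, hterm,
    laguerreFunctional_X_pow_mul_laguerre_self]
  · ring
  · intro k hk
    rw [hterm, laguerreFunctional_X_pow_mul_laguerre_of_lt (Finset.mem_range.mp hk), mul_zero]

lemma laguerreFunctional_laguerre_mul_laguerre (m n : ℕ) :
    laguerreFunctional (laguerre m * laguerre n) = if m = n then 1 else 0 := by
  wlog hmn : m ≤ n generalizing m n
  · rw [mul_comm, this n m (le_of_not_ge hmn)]
    simp only [eq_comm]
  rw [laguerreFunctional_mul_laguerre_of_natDegree_le ((natDegree_laguerre m).trans_le hmn),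
    coeff_laguerre]
  rcases hmn.eq_or_lt with rfl | hlt
  · have hfact : (m.factorial : ℝ) ≠ 0 := by positivity
    calc (-1 : ℝ) ^ m * m.factorial * ((-1) ^ m * m.choose m / m.factorial)
        = (-1) ^ m * (-1) ^ m := by
          rw [Nat.choose_self, Nat.cast_one]
          field_simp
      _ = if m = m then 1 else 0 := by rw [neg_one_pow_mul_self, if_pos rfl]
  · simp [Nat.choose_eq_zero_of_lt hlt, hlt.ne]

theorem isOrthonormalSequence_laguerre :
    IsOrthonormalSequence laguerreFunctional fun n => (-1 : ℝ) ^ n • laguerre n where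
  natDegree_eq n := by
    rw [natDegree_smul _ (by simp), natDegree_laguerre]
  leadingCoeff_pos n := by
    rw [leadingCoeff_smul_of_smul_regular _ (IsSMulRegular.of_ne_zero (by simp)), leadingCoeff,
      natDegree_laguerre, coeff_laguerre, smul_eq_mul, mul_div_assoc, ← mul_assoc,
      neg_one_pow_mul_self]
    simp [Nat.factorial_pos]
  map_mul m n := by
    rw [smul_mul_smul_comm, map_smul, laguerreFunctional_laguerre_mul_laguerre]
    split_ifs with h
    · rw [h, neg_one_pow_mul_self, one_smul]
    · rw [smul_zero]

end LaguerrePolynomials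

section CircleAverage

variable {E : Type*} [NormedAddCommGroup E]

lemma circleAverage_eq_integral_neg_pi_pi [NormedSpace ℝ E] (f : ℂ → E) (c : ℂ) (R : ℝ) :
    circleAverage f c R = (2 * π)⁻¹ • ∫ θ in -π..π, f (circleMap c R θ) := by
  have hper : (fun θ => f (circleMap c R θ)).Periodic (2 * π) := fun θ => by
    simp only [periodic_circleMap c R θ]
  rw [circleAverage_def, ← zero_add (2 * π), hper.intervalIntegral_add_eq 0 (-π)]
  ring_nf

variable [NormedSpace ℂ E] [CompleteSpace E] {f : ℂ → E} {R : ℝ}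

lemma circleAverage_inv_pow_smul_eq_iteratedDeriv (hR : 0 < R)
    (hf : DifferentiableOn ℂ f (Metric.closedBall 0 R)) (k : ℕ) :
    circleAverage (fun z => (z ^ k)⁻¹ • f z) 0 R =
      (k.factorial : ℂ)⁻¹ • iteratedDeriv k f 0 := by
  have hcauchy := hf.circleIntegral_one_div_sub_center_pow_smul hR k
  simp only [sub_zero, one_div] at hcauchy
  simp only [circleAverage_eq_circleIntegral hR.ne', sub_zero, smul_smul, ← mul_inv,
    ← pow_succ', hcauchy]
  congr 1
  field_simp

lemma circleAverage_one_add_div_pow_smul (hR : 0 < R)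
    (hf : DifferentiableOn ℂ f (Metric.closedBall 0 R)) (s : ℂ) (n : ℕ) :
    circleAverage (fun z => (1 + s / z) ^ n • f z) 0 R =
      ∑ k ∈ Finset.range (n + 1), (n.choose k * s ^ k / k.factorial) • iteratedDeriv k f 0 := by
  have hbinom (z : ℂ) : (1 + s / z) ^ n • f z =
      ∑ k ∈ Finset.range (n + 1), (n.choose k * s ^ k : ℂ) • (z ^ k)⁻¹ • f z := by
    rw [add_comm, add_pow, Finset.sum_smul]
    refine Finset.sum_congr rfl fun k _ => ?_
    rw [smul_smul, one_pow, mul_one, div_pow, div_eq_mul_inv]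
    ring_nf
  have hintegrable (k : ℕ) :
      CircleIntegrable (fun z => (n.choose k * s ^ k : ℂ) • (z ^ k)⁻¹ • f z) 0 R := by
    refine ContinuousOn.circleIntegrable hR.le (continuousOn_const.smul (ContinuousOn.smul ?_
      (hf.continuousOn.mono Metric.sphere_subset_closedBall)))
    exact (continuousOn_pow k).inv₀ fun z hz =>
      pow_ne_zero k (ne_zero_of_mem_sphere hR.ne' ⟨z, hz⟩)
  simp only [hbinom]
  rw [circleAverage_fun_sum fun k _ => hintegrable k]
  refine Finset.sum_congr rfl fun k _ => ?_
  rw [circleAverage_fun_smul, circleAverage_inv_pow_smul_eq_iteratedDeriv hR hf, smul_smul,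
    div_eq_mul_inv]

end CircleAverage

section LaplaceMethod

lemma one_sub_cos_eq_sq_mul_sinc_sq (x : ℝ) : 1 - cos x = x ^ 2 / 2 * sinc (x / 2) ^ 2 := by
  have hcos : cos x = 1 - 2 * sin (x / 2) ^ 2 := by
    rw [sin_sq_eq_half_sub, mul_div_cancel₀ x two_ne_zero]
    ring
  rcases eq_or_ne x 0 with rfl | hx
  · simp
  · rw [hcos, sinc_of_ne_zero (by positivity)]
    field_simp
    ring

lemma tendsto_mul_cos_div_sqrt_sub_one (φ : ℝ) :
    Tendsto (fun M => M * (cos (φ / √M) - 1)) atTop (𝓝 (-(1 / 2) * φ ^ 2)) := by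
  have hzero : Tendsto (fun M => φ / √M / 2) atTop (𝓝 0) := by
    simpa using (tendsto_sqrt_atTop.const_div_atTop φ).div_const 2
  have hsinc : Tendsto (fun M => -(1 / 2) * φ ^ 2 * sinc (φ / √M / 2) ^ 2) atTop
      (𝓝 (-(1 / 2) * φ ^ 2)) := by
    simpa only [Function.comp_apply, sinc_zero, one_pow, mul_one] using
      (((continuous_sinc.tendsto 0).comp hzero).pow 2).const_mul (-(1 / 2) * φ ^ 2)
  refine hsinc.congr' ?_
  filter_upwards [eventually_gt_atTop 0] with M hM
  rw [← neg_sub, one_sub_cos_eq_sq_mul_sinc_sq, div_pow φ, sq_sqrt hM.le]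
  field_simp

lemma mul_cos_div_sqrt_sub_one_le {M φ : ℝ} (hM : 0 < M) (hφ : |φ| ≤ π * √M) :
    M * (cos (φ / √M) - 1) ≤ -(2 / π ^ 2) * φ ^ 2 := by
  have hθ : |φ / √M| ≤ π := by
    rwa [abs_div, abs_of_nonneg (sqrt_nonneg M), div_le_iff₀ (sqrt_pos.mpr hM)]
  calc M * (cos (φ / √M) - 1) ≤ M * (-(2 / π ^ 2 * (φ / √M) ^ 2)) :=
        mul_le_mul_of_nonneg_left (by linarith [cos_le_one_sub_mul_cos_sq hθ]) hM.le
    _ = -(2 / π ^ 2) * φ ^ 2 := by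
        rw [div_pow φ, sq_sqrt hM.le]
        field_simp

variable {E : Type*} [NormedAddCommGroup E] [NormedSpace ℝ E]

/-- The function `exp (M * (cos θ - 1)) • g θ` on `(-π, π]` in the rescaled variable `φ = √M * θ`,
extended by zero to the whole line. -/
noncomputable def rescaledCosIntegrand (M : ℝ) (g : ℝ → E) : ℝ → E :=
  (Set.Ioc (-(π * √M)) (π * √M)).indicator
    fun φ => exp (M * (cos (φ / √M) - 1)) • g (φ / √M)

lemma integral_rescaledCosIntegrand {M : ℝ} (hM : 0 < M) (g : ℝ → E) :
    ∫ φ, rescaledCosIntegrand M g φ =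
      √M • ∫ θ in -π..π, exp (M * (cos θ - 1)) • g θ := by
  have hr : 0 < √M := sqrt_pos.mpr hM
  have hle : -(π * √M) ≤ π * √M := neg_le_self (by positivity)
  rw [rescaledCosIntegrand, integral_indicator measurableSet_Ioc,
    ← intervalIntegral.integral_of_le hle,
    intervalIntegral.integral_comp_div (fun θ => exp (M * (cos θ - 1)) • g θ) hr.ne', neg_div,
    mul_div_cancel_right₀ _ hr.ne']

lemma aestronglyMeasurable_rescaledCosIntegrand {M : ℝ} (hM : 0 < M) {g : ℝ → E}
    (hg : AEStronglyMeasurable g) : AEStronglyMeasurable (rescaledCosIntegrand M g) := by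
  have hscale : Measure.QuasiMeasurePreserving (fun φ => φ / √M) := by
    simp only [div_eq_inv_mul]
    exact Measure.quasiMeasurePreserving_smul volume (inv_ne_zero (sqrt_pos.mpr hM).ne')
  have hexp : Continuous fun φ => exp (M * (cos (φ / √M) - 1)) := by fun_prop
  exact (hexp.aestronglyMeasurable.smul (hg.comp_quasiMeasurePreserving hscale)).indicator
    measurableSet_Ioc

lemma norm_rescaledCosIntegrand_le {M C : ℝ} (hM : 0 < M) {g : ℝ → E} (hg : ∀ θ, ‖g θ‖ ≤ C)
    (φ : ℝ) : ‖rescaledCosIntegrand M g φ‖ ≤ exp (-(2 / π ^ 2) * φ ^ 2) * C := by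
  have hC : 0 ≤ C := (norm_nonneg _).trans (hg 0)
  by_cases hφ : φ ∈ Set.Ioc (-(π * √M)) (π * √M)
  · rw [rescaledCosIntegrand, Set.indicator_of_mem hφ, norm_smul, norm_of_nonneg (exp_pos _).le]
    have hcos := mul_cos_div_sqrt_sub_one_le hM (abs_le.mpr ⟨hφ.1.le, hφ.2⟩)
    exact mul_le_mul (exp_le_exp.mpr hcos) (hg _) (norm_nonneg _) (exp_pos _).le
  · rw [rescaledCosIntegrand, Set.indicator_of_notMem hφ, norm_zero]
    positivity

variable {ι : Type*} {l : Filter ι} {M : ι → ℝ} {g : ι → ℝ → E} {c : E}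

lemma tendsto_rescaledCosIntegrand {φ : ℝ} (hM : Tendsto M l atTop)
    (hlim : Tendsto (fun i => g i (φ / √(M i))) l (𝓝 c)) :
    Tendsto (fun i => rescaledCosIntegrand (M i) (g i) φ) l
      (𝓝 (exp (-(1 / 2) * φ ^ 2) • c)) := by
  have hexp : Tendsto (fun i => exp (M i * (cos (φ / √(M i)) - 1))) l
      (𝓝 (exp (-(1 / 2) * φ ^ 2))) :=
    ((tendsto_mul_cos_div_sqrt_sub_one φ).comp hM).rexp
  refine (hexp.smul hlim).congr' ?_
  have hr : Tendsto (fun i => π * √(M i)) l atTop :=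
    (tendsto_sqrt_atTop.comp hM).const_mul_atTop pi_pos
  filter_upwards [hr.eventually_gt_atTop |φ|] with i hi
  have hφ : φ ∈ Set.Ioc (-(π * √(M i))) (π * √(M i)) := ⟨(abs_lt.mp hi).1, (abs_lt.mp hi).2.le⟩
  rw [rescaledCosIntegrand, Set.indicator_of_mem hφ]

theorem tendsto_sqrt_smul_integral_exp_cos_smul [l.IsCountablyGenerated] [CompleteSpace E] {C : ℝ}
    (hM : Tendsto M l atTop) (hmeas : ∀ᶠ i in l, AEStronglyMeasurable (g i))
    (hbound : ∀ᶠ i in l, ∀ θ, ‖g i θ‖ ≤ C)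
    (hlim : ∀ φ, Tendsto (fun i => g i (φ / √(M i))) l (𝓝 c)) :
    Tendsto (fun i => √(M i) • ∫ θ in -π..π, exp (M i * (cos θ - 1)) • g i θ) l
      (𝓝 (√(2 * π) • c)) := by
  have hMpos : ∀ᶠ i in l, 0 < M i := hM.eventually_gt_atTop 0
  have hgauss : ∫ φ : ℝ, exp (-(1 / 2) * φ ^ 2) • c = √(2 * π) • c := by
    rw [integral_smul_const, integral_gaussian, div_div_eq_mul_div, div_one, mul_comm]
  rw [← hgauss]
  refine Tendsto.congr' (hMpos.mono fun i hi => integral_rescaledCosIntegrand hi (g i)) ?_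
  refine tendsto_integral_filter_of_dominated_convergence
    (fun φ => exp (-(2 / π ^ 2) * φ ^ 2) * C) ?_ ?_
    ((integrable_exp_neg_mul_sq (by positivity)).mul_const C)
    (ae_of_all _ fun φ => tendsto_rescaledCosIntegrand hM (hlim φ))
  · filter_upwards [hMpos, hmeas] with i hi hgi
    exact aestronglyMeasurable_rescaledCosIntegrand hi hgi
  · filter_upwards [hMpos, hbound] with i hi hgi
    exact ae_of_all _ (norm_rescaledCosIntegrand_le hi hgi)

end LaplaceMethod

section PowExpRatio

/-- The quotient of `(1 + w)ⁿ` by its first-order approximation `exp (n * w)`. -/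
noncomputable def powExpRatio (n : ℕ) (w : ℂ) : ℂ :=
  (1 + w) ^ n * Complex.exp (-(n * w))

lemma continuous_powExpRatio (n : ℕ) : Continuous (powExpRatio n) := by
  unfold powExpRatio
  fun_prop

lemma norm_one_add_le_exp (w : ℂ) : ‖1 + w‖ ≤ exp (w.re + ‖w‖ ^ 2 / 2) := by
  have hsq : ‖1 + w‖ ^ 2 = 2 * w.re + ‖w‖ ^ 2 + 1 := by
    simp only [← Complex.normSq_eq_norm_sq, Complex.normSq_apply, Complex.add_re, Complex.add_im,
      Complex.one_re, Complex.one_im]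
    ring
  refine le_of_sq_le_sq ?_ (exp_pos _).le
  calc ‖1 + w‖ ^ 2 ≤ exp (2 * w.re + ‖w‖ ^ 2) := hsq.trans_le (add_one_le_exp _)
    _ = exp (w.re + ‖w‖ ^ 2 / 2) ^ 2 := by
      rw [← exp_nat_mul]
      congr 1
      push_cast
      ring

lemma norm_powExpRatio_le (n : ℕ) (w : ℂ) : ‖powExpRatio n w‖ ≤ exp (n * ‖w‖ ^ 2 / 2) := by
  calc ‖powExpRatio n w‖ = ‖1 + w‖ ^ n * exp (-(n * w.re)) := by
        simp [powExpRatio, Complex.norm_exp]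
    _ ≤ exp (w.re + ‖w‖ ^ 2 / 2) ^ n * exp (-(n * w.re)) := by
        gcongr
        exact norm_one_add_le_exp w
    _ = exp (n * ‖w‖ ^ 2 / 2) := by
        rw [← exp_nat_mul, ← exp_add]
        congr 1
        ring

lemma powExpRatio_eq_exp {w : ℂ} (hw : 1 + w ≠ 0) (n : ℕ) :
    powExpRatio n w = Complex.exp (n * (Complex.log (1 + w) - w)) := by
  rw [mul_sub, sub_eq_add_neg, Complex.exp_add, Complex.exp_nat_mul, Complex.exp_log hw,
    powExpRatio]

lemma log_one_add_sub_self_add_sq_half_isBigO :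
    (fun w : ℂ => Complex.log (1 + w) - w + w ^ 2 / 2) =O[𝓝 0] fun w => w ^ 3 := by
  convert Complex.log_sub_logTaylor_isBigO 2 using 2 with w
  simp only [Complex.logTaylor_succ, Complex.logTaylor_zero, Pi.add_apply]
  norm_num
  ring

theorem tendsto_powExpRatio {ι : Type*} {l : Filter ι} {n : ι → ℕ} {w : ι → ℂ} {a : ℂ}
    (hw : Tendsto w l (𝓝 0)) (hnw : Tendsto (fun i => n i * w i ^ 2) l (𝓝 a)) :
    Tendsto (fun i => powExpRatio (n i) (w i)) l (𝓝 (Complex.exp (-(a / 2)))) := by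
  have hcubic : Tendsto (fun i => n i * w i ^ 3) l (𝓝 0) := by
    simpa [pow_succ, mul_assoc] using hnw.mul hw
  have herr : Tendsto (fun i => n i * (Complex.log (1 + w i) - w i + w i ^ 2 / 2)) l (𝓝 0) :=
    ((Asymptotics.isBigO_refl (fun i => (n i : ℂ)) l).mul
      (log_one_add_sub_self_add_sq_half_isBigO.comp_tendsto hw)).trans_tendsto hcubic
  have hlog : Tendsto (fun i => n i * (Complex.log (1 + w i) - w i)) l (𝓝 (-(a / 2))) := by
    simpa only [zero_sub] using (herr.sub (hnw.div_const 2)).congr fun i => by ring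
  refine ((Complex.continuous_exp.tendsto _).comp hlog).congr' ?_
  have hne : ∀ᶠ i in l, 1 + w i ≠ 0 := by
    have hone : Tendsto (fun i => 1 + w i) l (𝓝 1) := by simpa using hw.const_add 1
    exact hone.eventually_ne one_ne_zero
  filter_upwards [hne] with i hi
  exact (powExpRatio_eq_exp hi _).symm

end PowExpRatio

section LaguerreAsymptotics

variable {s : ℝ} {n : ℕ}

lemma eval_neg_laguerre_eq_circleAverage {R : ℝ} (hR : 0 < R) (s : ℝ) (n : ℕ) :
    (((laguerre n).eval (-s) : ℝ) : ℂ) =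
      circleAverage (fun z => (1 + s / z) ^ n * Complex.exp z) 0 R := by
  have hderiv (k : ℕ) : iteratedDeriv k Complex.exp 0 = 1 := by
    rw [iteratedDeriv_eq_iterate, Complex.iter_deriv_exp, Complex.exp_zero]
  have haverage := circleAverage_one_add_div_pow_smul hR
    Complex.differentiable_exp.differentiableOn s n
  simp only [smul_eq_mul, hderiv, mul_one] at haverage
  rw [haverage, eval_neg_laguerre]
  push_cast
  rfl

/-- On the circle `|z|² = s n` we have `n (s / z) = conj z`, so the first-order part of
`(1 + s / z) ^ n` combines with `exp z` into the real factor `exp (2 re z)`. -/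
lemma one_add_div_pow_mul_exp_eq {z : ℂ} (hz : z ≠ 0) (hnorm : ‖z‖ ^ 2 = s * n) :
    (1 + s / z) ^ n * Complex.exp z = exp (2 * z.re) * powExpRatio n (s / z) := by
  have hconj : n * (s / z) = (starRingEnd ℂ) z := by
    have hmul : (starRingEnd ℂ) z * z = s * n := by
      rw [Complex.conj_mul']
      exact_mod_cast hnorm
    rw [← mul_div_assoc, div_eq_iff hz, hmul, mul_comm]
  have hexp : Complex.exp z = exp (2 * z.re) * Complex.exp (-(starRingEnd ℂ) z) := by
    rw [Complex.ofReal_exp, ← Complex.add_conj, ← Complex.exp_add, add_neg_cancel_right]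
  rw [powExpRatio, hconj, hexp]
  ring

lemma exp_neg_mul_eval_neg_laguerre (hs : 0 < s) (hn : n ≠ 0) :
    ((exp (-(2 * √(s * n))) * (laguerre n).eval (-s) : ℝ) : ℂ) =
      (2 * π)⁻¹ • ∫ θ in -π..π,
        exp (2 * √(s * n) * (cos θ - 1)) • powExpRatio n (s / circleMap 0 √(s * n) θ) := by
  set R := √(s * n)
  have hR : 0 < R := sqrt_pos.mpr (by positivity)
  have hnorm (θ : ℝ) : ‖circleMap 0 R θ‖ ^ 2 = s * n := by
    rw [norm_circleMap_zero, sq_abs, sq_sqrt (by positivity)]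
  have hre (θ : ℝ) : (circleMap 0 R θ).re = R * cos θ := by
    simp [circleMap, Complex.exp_ofReal_mul_I_re]
  have hfactor (θ : ℝ) : exp (2 * R * (cos θ - 1)) =
      exp (-(2 * R)) * exp (2 * (circleMap 0 R θ).re) := by
    rw [← exp_add, hre]
    congr 1
    ring
  push_cast
  rw [eval_neg_laguerre_eq_circleAverage hR, circleAverage_eq_integral_neg_pi_pi, mul_smul_comm,
    ← intervalIntegral.integral_const_mul]
  congr 2 with θ
  rw [one_add_div_pow_mul_exp_eq (circleMap_ne_center hR.ne') (hnorm θ), hfactor,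
    Complex.real_smul]
  push_cast
  ring

lemma continuous_powExpRatio_div_circleMap {R : ℝ} (hR : R ≠ 0) (s : ℂ) (n : ℕ) :
    Continuous fun θ => powExpRatio n (s / circleMap 0 R θ) :=
  (continuous_powExpRatio n).comp
    (continuous_const.div (continuous_circleMap 0 R) fun _ => circleMap_ne_center hR)

lemma norm_powExpRatio_div_circleMap_le (hs : 0 < s) (hn : n ≠ 0) (θ : ℝ) :
    ‖powExpRatio n (s / circleMap 0 √(s * n) θ)‖ ≤ exp (s / 2) := by
  refine (norm_powExpRatio_le _ _).trans_eq ?_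
  rw [norm_div, norm_circleMap_zero, div_pow, sq_abs, sq_sqrt (by positivity), Complex.norm_real,
    norm_of_nonneg hs.le]
  field_simp

lemma tendsto_sqrt_mul_natCast (hs : 0 < s) : Tendsto (fun n : ℕ => √(s * n)) atTop atTop :=
  tendsto_sqrt_atTop.comp (tendsto_natCast_atTop_atTop.const_mul_atTop hs)

lemma tendsto_powExpRatio_div_circleMap (hs : 0 < s) {θ : ℕ → ℝ} (hθ : Tendsto θ atTop (𝓝 0)) :
    Tendsto (fun n => powExpRatio n (s / circleMap 0 √(s * n) (θ n))) atTop
      (𝓝 (exp (-(s / 2)) : ℝ)) := by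
  have hw : Tendsto (fun n : ℕ => (s : ℂ) / circleMap 0 √(s * n) (θ n)) atTop (𝓝 0) := by
    rw [tendsto_zero_iff_norm_tendsto_zero]
    simp only [norm_div, norm_circleMap_zero, Complex.norm_real, norm_of_nonneg hs.le,
      abs_of_nonneg (sqrt_nonneg _)]
    exact (tendsto_sqrt_mul_natCast hs).const_div_atTop s
  have hphase : Tendsto (fun n => (s : ℂ) / circleMap 0 1 (θ n) ^ 2) atTop (𝓝 s) := by
    have hcircle : Tendsto (fun n => circleMap 0 1 (θ n)) atTop (𝓝 1) := by
      have hone : circleMap 0 1 0 = 1 := by simp [circleMap]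
      exact hone ▸ ((continuous_circleMap 0 1).tendsto 0).comp hθ
    simpa [Pi.div_def] using tendsto_const_nhds.div (hcircle.pow 2) (by simp)
  have hnw : Tendsto (fun n : ℕ => n * ((s : ℂ) / circleMap 0 √(s * n) (θ n)) ^ 2) atTop
      (𝓝 s) := by
    refine hphase.congr' ?_
    filter_upwards [eventually_ne_atTop 0] with n hn
    have hsq : (√(s * n) : ℂ) ^ 2 = s * n := by
      exact_mod_cast sq_sqrt (by positivity : 0 ≤ s * n)
    have hs' : (s : ℂ) ≠ 0 := by exact_mod_cast hs.ne'
    simp only [circleMap, zero_add, div_pow, mul_pow, hsq]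
    field_simp
    simp
  simpa using tendsto_powExpRatio hw hnw

theorem tendsto_eval_neg_laguerre (hs : 0 < s) :
    Tendsto (fun n : ℕ => √√(s * n) * (exp (-(2 * √(s * n))) * (laguerre n).eval (-s))) atTop
      (𝓝 ((2 * √π)⁻¹ * exp (-(s / 2)))) := by
  have hM : Tendsto (fun n : ℕ => 2 * √(s * n)) atTop atTop :=
    (tendsto_sqrt_mul_natCast hs).const_mul_atTop two_pos
  have hlaplace := tendsto_sqrt_smul_integral_exp_cos_smul (C := exp (s / 2)) hM
    (g := fun n θ => powExpRatio n (s / circleMap 0 √(s * n) θ))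
    ((eventually_ne_atTop 0).mono fun n hn =>
      (continuous_powExpRatio_div_circleMap (by positivity) s n).aestronglyMeasurable)
    ((eventually_ne_atTop 0).mono fun n hn => norm_powExpRatio_div_circleMap_le hs hn)
    fun φ => tendsto_powExpRatio_div_circleMap hs
      ((tendsto_sqrt_atTop.comp hM).const_div_atTop φ)
  have hconst : (2 * √π)⁻¹ * exp (-(s / 2)) =
      (√2)⁻¹ * (2 * π)⁻¹ * (√(2 * π) * exp (-(s / 2))) := by
    rw [sqrt_mul two_pos.le]
    field_simp
    rw [sq_sqrt pi_pos.le]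
  have hscaled := (Complex.continuous_re.tendsto _).comp
    (hlaplace.const_smul ((√2)⁻¹ * (2 * π)⁻¹))
  simp only [Complex.smul_re, Complex.ofReal_re, smul_eq_mul] at hscaled
  rw [hconst]
  refine hscaled.congr' ?_
  filter_upwards [eventually_ne_atTop 0] with n hn
  have hcoeff : (√2)⁻¹ * (2 * π)⁻¹ * √(2 * √(s * n)) = √√(s * n) * (2 * π)⁻¹ := by
    rw [sqrt_mul two_pos.le]
    field_simp
  rw [Function.comp_apply, smul_smul, hcoeff, mul_smul, ← exp_neg_mul_eval_neg_laguerre hs hn,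
    Complex.smul_re, Complex.ofReal_re, smul_eq_mul]

theorem isEquivalent_eval_laguerre {t : ℝ} (ht : t < 0) :
    Asymptotics.IsEquivalent atTop (fun n : ℕ => (laguerre n).eval t) fun n : ℕ =>
      (2 * √π)⁻¹ * (-t * n) ^ (-(1 / 4) : ℝ) * exp (2 * √(-t * n) + t / 2) := by
  have hlim := (tendsto_eval_neg_laguerre (neg_pos.mpr ht)).div_const ((2 * √π)⁻¹ * exp (t / 2))
  rw [neg_neg, neg_div, neg_neg, div_self (by positivity)] at hlim
  refine Asymptotics.isEquivalent_of_tendsto_one (hlim.congr fun n => ?_)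
  have hx : 0 ≤ -t * n := mul_nonneg (neg_pos.mpr ht).le n.cast_nonneg
  have hroot : (-t * n) ^ (-(1 / 4) : ℝ) = (√√(-t * n))⁻¹ := by
    rw [rpow_neg hx, sqrt_eq_rpow, sqrt_eq_rpow, ← rpow_mul hx]
    norm_num
  rw [Pi.div_apply, hroot, exp_add, exp_neg]
  field_simp

end LaguerreAsymptotics

/-- **Perron's asymptotics for Laguerre polynomials.**
Let `(P n)` be the orthonormal polynomials for the weight `exp(−x)` on `[0,∞)`.
Then for every fixed `t < 0`,
`P_N(t) ≃ (−1)^N (2√π)^{−1} (−tN)^{−1/4} exp(2√(−tN) + t/2)` as `N → ∞`. -/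
theorem perron_asymptotics_laguerre
    (P : ℕ → Polynomial ℝ)
    (hdeg : ∀ n, (P n).natDegree = n)
    (hlead : ∀ n, 0 < (P n).leadingCoeff)
    (horth : ∀ m n, (∫ x in Set.Ioi (0:ℝ),
      (P m).eval x * (P n).eval x * Real.exp (-x)) = if m = n then 1 else 0)
    (t : ℝ) (ht : t < 0) :
    Tendsto (fun N : ℕ =>
      (P N).eval t /
        ((-1 : ℝ) ^ N * (2 * Real.sqrt π)⁻¹ * (-t * N) ^ (-(1/4) : ℝ) *
          Real.exp (2 * Real.sqrt (-t * N) + t / 2)))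
      atTop (nhds 1) := by
  have hP : IsOrthonormalSequence laguerreFunctional P :=
    ⟨hdeg, hlead, fun m n => by simpa only [laguerreFunctional_apply, eval_mul] using horth m n⟩
  have hlaguerre : P = fun n => (-1 : ℝ) ^ n • laguerre n :=
    hP.unique isOrthonormalSequence_laguerre
  have hne : ∀ᶠ N : ℕ in atTop,
      (2 * √π)⁻¹ * (-t * N) ^ (-(1 / 4) : ℝ) * exp (2 * √(-t * N) + t / 2) ≠ 0 := by
    filter_upwards [eventually_gt_atTop 0] with N hN
    have hx : 0 < -t * N := mul_pos (neg_pos.mpr ht) (Nat.cast_pos.mpr hN)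
    positivity
  have hratio := (Asymptotics.isEquivalent_iff_tendsto_one hne).mp (isEquivalent_eval_laguerre ht)
  refine hratio.congr fun N => ?_
  rw [hlaguerre, eval_smul, smul_eq_mul, mul_assoc, mul_assoc, mul_div_mul_left _ _ (by simp),
    ← mul_assoc, Pi.div_apply]
end

section
/- Fix β > 1/2, and let λ_N, (P_n), K_{jj} be as in the context. Then lim_{N→∞} (λ_N/(2π)) · ∑_{j=0}^N K_{jj} = 1; that is, the lower bound λ_N ≥ 2π/∑_{j=0}^N K_{jj} is asymptotically sharp. -/
open MeasureTheory Real Filter Topology Polynomial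

/-!
Writing `K_N(z) = ∑_{j ≤ N} |P_j(z)|²`, the sum of the `K_jj` is the integral of `K_N` over the unit
circle, and by Parseval `λ_N / 2π` is the minimum of `L(f²) / ∫ |f(exp(iφ))|² dφ` over polynomials
`f` of degree at most `N`, where `L` is integration against the weight. The lower bound is
`|f(z)|² ≤ L(f²) K_N(z)`, applied to a minimizer. For the upper bound, use the Christoffel–Darboux
kernel `K_N(-1, ·)` as a trial polynomial.

Gauss quadrature at the positive zeros of `P_{N+1}` writes `K_N(z)` as a positive combination of the
`|ℓ_r(z)|²`, where the `ℓ_r` are the Lagrange basis polynomials. All factors `|z - r|` are largest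
on the unit circle at `z = -1`, so once many zeros lie in a fixed compact interval `[a, b]` of
`(0, ∞)`, the integral of `K_N` concentrates near `-1`. There the `ℓ_r` have nearly equal phases
relative to their values at `-1`, hence `|K_N(-1, z)|² ≈ K_N(-1) K_N(z)`.

That zeros accumulate in `[a, b]` follows from weak convergence of the quadrature measures, which
holds after the substitution `x = y²` because `exp(c √x)` is integrable for all `c`: this is where
`β > 1/2` enters.
-/

/-- Strict positivity, relative to a set `S`, of a linear functional on real polynomials: nonzero
polynomials that are nonnegative on `S` have positive value. It holds for integration against a
measure that has moments of all orders and is concentrated on `S`, but not on finitely many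
points. -/
def StrictlyPositiveOn (S : Set ℝ) (L : ℝ[X] →ₗ[ℝ] ℝ) : Prop :=
  ∀ p : ℝ[X], p ≠ 0 → (∀ x ∈ S, 0 ≤ p.eval x) → 0 < L p

section Orthogonality

variable {S : Set ℝ} {L : ℝ[X] →ₗ[ℝ] ℝ} {P : ℕ → ℝ[X]} {p : ℝ[X]}

lemma StrictlyPositiveOn.map_sq_pos (hL : StrictlyPositiveOn S L) (hp : p ≠ 0) : 0 < L (p ^ 2) :=
  hL _ (pow_ne_zero 2 hp) fun x _ ↦ by rw [eval_pow]; positivity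

lemma ne_zero_of_orthonormal (horth : ∀ m n, L (P m * P n) = if m = n then 1 else 0) (n : ℕ) :
    P n ≠ 0 := by
  intro h
  simpa [h] using horth n n

lemma map_mul_eq_zero_of_orthonormal (hdeg : ∀ n, (P n).natDegree = n)
    (horth : ∀ m n, L (P m * P n) = if m = n then 1 else 0) {n : ℕ} {g : ℝ[X]}
    (hg : g.natDegree < n) : L (P n * g) = 0 := by
  have hP := ne_zero_of_orthonormal horth
  let basis : Polynomial.Sequence ℝ := ⟨P, fun i ↦ by rw [degree_eq_natDegree (hP i), hdeg]⟩
  have hspan : Submodule.span ℝ (P '' Set.Iio n) = degreeLT ℝ n :=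
    basis.span_degreeLT fun i _ ↦ (leadingCoeff_ne_zero.2 (hP i)).isUnit
  have hle : Submodule.span ℝ (P '' Set.Iio n) ≤ (L ∘ₗ LinearMap.mulLeft ℝ (P n)).ker := by
    rw [Submodule.span_le]
    rintro _ ⟨i, hi, rfl⟩
    simp [horth, (Set.mem_Iio.1 hi).ne']
  exact hle (hspan ▸ mem_degreeLT.2 (degree_le_natDegree.trans_lt (mod_cast hg)))

-- Writing `p = d * q`, the value `L (p * q) = L (d * q ^ 2)` would be both zero and positive.
lemma not_dvd_of_orthogonal_of_nonneg (hL : StrictlyPositiveOn S L) (hp : p ≠ 0)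
    (horth : ∀ g : ℝ[X], g.natDegree < p.natDegree → L (p * g) = 0) {d : ℝ[X]}
    (hd : 0 < d.natDegree) (hd_nonneg : ∀ x ∈ S, 0 ≤ d.eval x) : ¬ d ∣ p := by
  rintro ⟨q, rfl⟩
  have hq : q ≠ 0 := right_ne_zero_of_mul hp
  have hzero : L (d * q * q) = 0 :=
    horth q (by rw [natDegree_mul (left_ne_zero_of_mul hp) hq]; lia)
  refine (hL (d * q * q) (mul_ne_zero hp hq) fun x hx ↦ ?_).ne' hzero
  rw [mul_assoc, eval_mul, eval_mul]
  exact mul_nonneg (hd_nonneg x hx) (mul_self_nonneg _)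

lemma splits_of_forall_quadratic_not_dvd
    (h : ∀ z : ℂ, ¬ X ^ 2 - C (2 * z.re) * X + C (‖z‖ ^ 2) ∣ p) : p.Splits := by
  refine Splits.of_splits_map_of_injective (algebraMap ℝ ℂ).injective
    (IsAlgClosed.splits (p.map (algebraMap ℝ ℂ))) fun z hz ↦ ⟨z.re, ?_⟩
  have hz_im : z.im = 0 := by
    by_contra him
    exact h z (p.quadratic_dvd_of_aeval_eq_zero_im_ne_zero (mem_aroots'.1 hz).2 him)
  exact Complex.ext (Complex.ofReal_re z.re) (hz_im ▸ Complex.ofReal_im z.re)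

lemma splits_of_orthogonal (hL : StrictlyPositiveOn S L) (hp : p ≠ 0)
    (horth : ∀ g : ℝ[X], g.natDegree < p.natDegree → L (p * g) = 0) : p.Splits := by
  refine splits_of_forall_quadratic_not_dvd fun z ↦
    not_dvd_of_orthogonal_of_nonneg hL hp horth ?_ fun x _ ↦ ?_
  · have : (X ^ 2 - C (2 * z.re) * X + C (‖z‖ ^ 2)).natDegree = 2 := by compute_degree!
    lia
  · simp only [eval_add, eval_sub, eval_mul, eval_pow, eval_X, eval_C]
    rw [← Complex.normSq_eq_norm_sq, Complex.normSq_apply]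
    linarith [sq_nonneg (x - z.re), mul_self_nonneg z.im]

lemma roots_nodup_of_orthogonal (hL : StrictlyPositiveOn S L) (hp : p ≠ 0)
    (horth : ∀ g : ℝ[X], g.natDegree < p.natDegree → L (p * g) = 0) : p.roots.Nodup := by
  refine Multiset.nodup_iff_count_le_one.2 fun r ↦ ?_
  by_contra! hr
  rw [count_roots] at hr
  refine not_dvd_of_orthogonal_of_nonneg hL hp horth ?_ (fun x _ ↦ ?_)
    ((le_rootMultiplicity_iff hp).1 hr)
  · simp
  · simpa using sq_nonneg (x - r)

lemma exists_eq_C_mul_nodal_of_orthogonal (hL : StrictlyPositiveOn S L) (hp : p ≠ 0)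
    (horth : ∀ g : ℝ[X], g.natDegree < p.natDegree → L (p * g) = 0) :
    ∃ s : Finset ℝ, s.card = p.natDegree ∧ p = C p.leadingCoeff * Lagrange.nodal s id := by
  have hsplits := splits_of_orthogonal hL hp horth
  have hnodup := roots_nodup_of_orthogonal hL hp horth
  refine ⟨⟨p.roots, hnodup⟩, hsplits.natDegree_eq_card_roots.symm, ?_⟩
  exact hsplits.eq_prod_roots

end Orthogonality

/-- A quadrature rule with `n` real nodes and positive weights that computes the functional `L`
exactly on polynomials of degree less than `2 * n`. The values of `weight` off `nodes` are
irrelevant. -/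
structure GaussQuadrature (L : ℝ[X] →ₗ[ℝ] ℝ) (n : ℕ) where
  nodes : Finset ℝ
  weight : ℝ → ℝ
  card_nodes : nodes.card = n
  weight_pos : ∀ r ∈ nodes, 0 < weight r
  map_eq_sum : ∀ f : ℝ[X], f.natDegree < 2 * n → L f = ∑ r ∈ nodes, weight r * f.eval r

namespace GaussQuadrature

section Construction

variable {S : Set ℝ} {L : ℝ[X] →ₗ[ℝ] ℝ} {s : Finset ℝ}

lemma map_eq_sum_basis_of_degree_lt {f : ℝ[X]} (hf : f.degree < s.card) :
    L f = ∑ r ∈ s, L (Lagrange.basis s id r) * f.eval r := by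
  conv_lhs => rw [Lagrange.eq_interpolate Function.injective_id.injOn hf]
  simp only [Lagrange.interpolate_apply, map_sum, ← smul_eq_C_mul, map_smul, smul_eq_mul, id]
  exact Finset.sum_congr rfl fun r _ ↦ mul_comm _ _

lemma map_eq_sum_basis_of_nodal_orthogonal
    (horth : ∀ g : ℝ[X], g.natDegree < s.card → L (Lagrange.nodal s id * g) = 0) {f : ℝ[X]}
    (hf : f.natDegree < 2 * s.card) :
    L f = ∑ r ∈ s, L (Lagrange.basis s id r) * f.eval r := by
  have hmonic : (Lagrange.nodal s id : ℝ[X]).Monic := Lagrange.nodal_monic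
  have hmod : (f %ₘ Lagrange.nodal s id).degree < s.card := by
    simpa only [Lagrange.degree_nodal] using degree_modByMonic_lt f hmonic
  have hdiv : (f /ₘ Lagrange.nodal s id).natDegree < s.card := by
    rw [natDegree_divByMonic f hmonic, Lagrange.natDegree_nodal]
    lia
  have hdecomp := modByMonic_add_div f (Lagrange.nodal s id)
  have heval : ∀ r ∈ s, (f %ₘ Lagrange.nodal s id).eval r = f.eval r := fun r hr ↦ by
    have : (Lagrange.nodal s id).eval r = 0 := Lagrange.eval_nodal_at_node (v := id) hr
    conv_rhs => rw [← hdecomp, eval_add, eval_mul, this, zero_mul, add_zero]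
  calc L f = L (f %ₘ Lagrange.nodal s id) := by
        conv_lhs => rw [← hdecomp, map_add, horth _ hdiv, add_zero]
    _ = ∑ r ∈ s, L (Lagrange.basis s id r) * f.eval r := by
        rw [map_eq_sum_basis_of_degree_lt hmod]
        exact Finset.sum_congr rfl fun r hr ↦ by rw [heval r hr]

lemma sum_mul_eval_basis_eq {r : ℝ} (hr : r ∈ s) (c : ℝ → ℝ) :
    ∑ t ∈ s, c t * (Lagrange.basis s id r).eval t = c r := by
  rw [Finset.sum_eq_single_of_mem r hr fun t ht htr ↦ ?_]
  · have := Lagrange.eval_basis_self (v := id) Function.injective_id.injOn hr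
    rw [show eval r (Lagrange.basis s id r) = 1 from this, mul_one]
  · have := Lagrange.eval_basis_of_ne (v := id) htr.symm ht
    rw [show eval t (Lagrange.basis s id r) = 0 from this, mul_zero]

lemma sum_mul_eval_basis_sq_eq {r : ℝ} (hr : r ∈ s) (c : ℝ → ℝ) :
    ∑ t ∈ s, c t * (Lagrange.basis s id r).eval t ^ 2 = c r := by
  have := Lagrange.eval_basis_self (v := id) Function.injective_id.injOn hr
  simp_rw [sq, ← mul_assoc]
  rw [sum_mul_eval_basis_eq hr, show eval r (Lagrange.basis s id r) = 1 from this, mul_one]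

lemma natDegree_basis_add_one {r : ℝ} (hr : r ∈ s) :
    (Lagrange.basis s id r).natDegree + 1 = s.card := by
  rw [Lagrange.natDegree_basis Function.injective_id.injOn hr,
    Nat.sub_add_cancel (Finset.card_pos.2 ⟨r, hr⟩)]

/-- The Gauss quadrature rule on the zeros of an orthogonal polynomial: its weights are the values
of `L` on the Lagrange basis. -/
noncomputable def ofNodalOrthogonal (hL : StrictlyPositiveOn S L)
    (horth : ∀ g : ℝ[X], g.natDegree < s.card → L (Lagrange.nodal s id * g) = 0) :
    GaussQuadrature L s.card where
  nodes := s
  weight r := L (Lagrange.basis s id r)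
  card_nodes := rfl
  weight_pos r hr := by
    have hdeg := natDegree_basis_add_one hr
    have hsq : L (Lagrange.basis s id r ^ 2) = L (Lagrange.basis s id r) := by
      rw [map_eq_sum_basis_of_nodal_orthogonal horth (by rw [natDegree_pow]; lia)]
      simp_rw [eval_pow]
      exact sum_mul_eval_basis_sq_eq hr fun t ↦ L (Lagrange.basis s id t)
    rw [← hsq]
    exact hL.map_sq_pos (Lagrange.basis_ne_zero Function.injective_id.injOn hr)
  map_eq_sum _ hf := map_eq_sum_basis_of_nodal_orthogonal horth hf

lemma nonempty_of_orthonormal (hL : StrictlyPositiveOn S L) {P : ℕ → ℝ[X]}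
    (hdeg : ∀ n, (P n).natDegree = n) (horth : ∀ m n, L (P m * P n) = if m = n then 1 else 0)
    (n : ℕ) : Nonempty (GaussQuadrature L n) := by
  have hP := ne_zero_of_orthonormal horth n
  have hlow : ∀ g : ℝ[X], g.natDegree < n → L (P n * g) = 0 :=
    fun _ ↦ map_mul_eq_zero_of_orthonormal hdeg horth
  obtain ⟨s, hcard, hnodal⟩ := exists_eq_C_mul_nodal_of_orthogonal hL hP (by rwa [hdeg])
  obtain rfl : s.card = n := hcard.trans (hdeg n)
  refine ⟨ofNodalOrthogonal hL fun g hg ↦ ?_⟩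
  have hzero := hlow g hg
  rw [hnodal, mul_assoc, ← smul_eq_C_mul, map_smul, smul_eq_mul] at hzero
  exact (mul_eq_zero.1 hzero).resolve_left (leadingCoeff_ne_zero.2 hP)

end Construction

variable {L : ℝ[X] →ₗ[ℝ] ℝ} {n : ℕ} (Q : GaussQuadrature L n)

lemma nodes_pos (hL : StrictlyPositiveOn (Set.Ici 0) L) {r : ℝ} (hr : r ∈ Q.nodes) : 0 < r := by
  have hdeg := Q.card_nodes ▸ natDegree_basis_add_one hr
  have hbasis : Lagrange.basis Q.nodes id r ≠ 0 :=
    Lagrange.basis_ne_zero Function.injective_id.injOn hr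
  have hmap : L (X * Lagrange.basis Q.nodes id r ^ 2) = Q.weight r * r := by
    rw [Q.map_eq_sum _ (by rw [natDegree_X_mul (pow_ne_zero 2 hbasis), natDegree_pow]; lia)]
    simp_rw [eval_mul, eval_X, eval_pow, ← mul_assoc]
    exact sum_mul_eval_basis_sq_eq hr fun t ↦ Q.weight t * t
  have hpos : 0 < L (X * Lagrange.basis Q.nodes id r ^ 2) := by
    refine hL _ (mul_ne_zero X_ne_zero (pow_ne_zero 2 hbasis)) fun x hx ↦ ?_
    simpa using mul_nonneg hx (sq_nonneg _)
  exact pos_of_mul_pos_right (hmap ▸ hpos) (Q.weight_pos r hr).le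

end GaussQuadrature

section ReverseCauchySchwarz

variable {ι : Type*} {s : Finset ι} {a : ι → ℝ} {v : ι → ℂ} {δ : ℝ}

lemma one_sub_mul_sum_le_norm_sum (ha : ∀ i ∈ s, 0 ≤ a i) (hv : ∀ i ∈ s, ‖v i - 1‖ ≤ δ) :
    (1 - δ) * ∑ i ∈ s, a i ≤ ‖∑ i ∈ s, (a i : ℂ) * v i‖ := by
  have hdiff : ‖∑ i ∈ s, (a i : ℂ) * v i - (∑ i ∈ s, a i : ℝ)‖ ≤ δ * ∑ i ∈ s, a i := by
    push_cast
    rw [← Finset.sum_sub_distrib, Finset.mul_sum]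
    refine norm_sum_le_of_le s fun i hi ↦ ?_
    rw [← mul_sub_one, norm_mul, Complex.norm_of_nonneg (ha i hi), mul_comm]
    exact mul_le_mul_of_nonneg_right (hv i hi) (ha i hi)
  have htri := norm_sub_norm_le ((∑ i ∈ s, a i : ℝ) : ℂ) (∑ i ∈ s, (a i : ℂ) * v i)
  rw [Complex.norm_of_nonneg (Finset.sum_nonneg ha), norm_sub_rev] at htri
  linarith

lemma sum_mul_norm_sq_le (ha : ∀ i ∈ s, 0 ≤ a i) (hv : ∀ i ∈ s, ‖v i - 1‖ ≤ δ) :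
    ∑ i ∈ s, a i * ‖v i‖ ^ 2 ≤ (1 + δ) ^ 2 * ∑ i ∈ s, a i := by
  rw [Finset.mul_sum]
  refine Finset.sum_le_sum fun i hi ↦ ?_
  have hnorm : ‖v i‖ ≤ 1 + δ := by
    have := norm_le_norm_add_norm_sub 1 (v i)
    rw [norm_one, norm_sub_rev] at this
    linarith [hv i hi]
  rw [mul_comm]
  gcongr
  exact ha i hi

lemma sum_mul_sum_norm_sq_le_norm_sum_sq (hδ : δ ≤ 1) (ha : ∀ i ∈ s, 0 ≤ a i)
    (hv : ∀ i ∈ s, ‖v i - 1‖ ≤ δ) :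
    (1 - δ) ^ 2 * ((∑ i ∈ s, a i) * ∑ i ∈ s, a i * ‖v i‖ ^ 2) ≤
      (1 + δ) ^ 2 * ‖∑ i ∈ s, (a i : ℂ) * v i‖ ^ 2 := by
  have hsum : 0 ≤ ∑ i ∈ s, a i := Finset.sum_nonneg ha
  calc (1 - δ) ^ 2 * ((∑ i ∈ s, a i) * ∑ i ∈ s, a i * ‖v i‖ ^ 2)
      ≤ (1 - δ) ^ 2 * ((∑ i ∈ s, a i) * ((1 + δ) ^ 2 * ∑ i ∈ s, a i)) := by
        gcongr
        exact sum_mul_norm_sq_le ha hv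
    _ = (1 + δ) ^ 2 * ((1 - δ) * ∑ i ∈ s, a i) ^ 2 := by ring
    _ ≤ (1 + δ) ^ 2 * ‖∑ i ∈ s, (a i : ℂ) * v i‖ ^ 2 := by
        have := mul_nonneg (sub_nonneg.2 hδ) hsum
        gcongr
        exact one_sub_mul_sum_le_norm_sum ha hv

end ReverseCauchySchwarz

lemma star_dotProduct_self_eq_sum_norm_sq {ι : Type*} [Fintype ι] (u : ι → ℂ) :
    star u ⬝ᵥ u = (∑ i, ‖u i‖ ^ 2 : ℝ) := by
  simp [dotProduct, Complex.conj_mul']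

lemma sum_norm_sq_mulVec_of_mul_conjTranspose_eq_one {m ι : Type*} [Fintype m] [Fintype ι]
    [DecidableEq m] {U : Matrix m ι ℂ} (hcard : Fintype.card m = Fintype.card ι)
    (hU : U * U.conjTranspose = 1) (y : ι → ℂ) :
    ∑ i, ‖(U.mulVec y) i‖ ^ 2 = ∑ i, ‖y i‖ ^ 2 := by
  classical
  have hU' : U.conjTranspose * U = 1 :=
    (Matrix.mul_eq_one_comm_of_card_eq m ι ℂ hcard).1 hU
  have : star (U.mulVec y) ⬝ᵥ U.mulVec y = star y ⬝ᵥ y := by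
    rw [Matrix.star_mulVec, ← Matrix.dotProduct_mulVec, Matrix.mulVec_mulVec, hU',
      Matrix.one_mulVec]
  rw [star_dotProduct_self_eq_sum_norm_sq, star_dotProduct_self_eq_sum_norm_sq] at this
  exact_mod_cast this

lemma basis_mul_X_sub_C_eq_C_mul_nodal {F : Type*} [Field F] [DecidableEq F] {s : Finset F} {r : F}
    (hr : r ∈ s) : Lagrange.basis s id r * (X - C r) =
      C (Lagrange.nodalWeight s id r) * Lagrange.nodal s id := by
  simp_rw [Lagrange.nodal_eq_mul_nodal_erase hr, Lagrange.basis, Lagrange.basisDivisor,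
    Finset.prod_mul_distrib, Lagrange.nodalWeight, map_prod, Lagrange.nodal, id]
  ring

lemma aeval_basis_eq {s : Finset ℝ} {r x : ℝ} {z : ℂ} (hr : r ∈ s) (hx : x ∉ s)
    (hz : z - r ≠ 0) :
    aeval z (Lagrange.basis s id r) = (Lagrange.basis s id r).eval x *
      (aeval z (Lagrange.nodal s id) / aeval (x : ℂ) (Lagrange.nodal s id) *
        ((x - r) / (z - r))) := by
  have hxr : (x : ℂ) - r ≠ 0 := sub_ne_zero.2 (by rintro h; exact hx (Complex.ofReal_inj.1 h ▸ hr))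
  have hNx : aeval (x : ℂ) (Lagrange.nodal s id) ≠ 0 := by
    rw [← Complex.coe_algebraMap, aeval_algebraMap_apply_eq_algebraMap_eval, _root_.map_ne_zero]
    exact Lagrange.eval_nodal_not_at_node fun i hi h ↦ hx (h ▸ hi)
  have hbasis (y : ℂ) : aeval y (Lagrange.basis s id r) * (y - r) =
      Lagrange.nodalWeight s id r * aeval y (Lagrange.nodal s id) := by
    simpa using congrArg (aeval y) (basis_mul_X_sub_C_eq_C_mul_nodal hr)
  have hbx := hbasis x
  rw [← Complex.coe_algebraMap, aeval_algebraMap_apply_eq_algebraMap_eval,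
    Complex.coe_algebraMap] at hbx
  rw [eq_div_of_mul_eq hz (hbasis z), eq_div_of_mul_eq hxr hbx]
  field_simp

namespace GaussQuadrature

variable {L : ℝ[X] →ₗ[ℝ] ℝ} {n : ℕ} (Q : GaussQuadrature L n)

/-- The Christoffel–Darboux kernel `K(z, z̄)` of `L` on polynomials of degree less than `n`, written
in the Lagrange basis at the nodes. -/
noncomputable def kernel (z : ℂ) : ℝ :=
  ∑ r ∈ Q.nodes, ‖aeval z (Lagrange.basis Q.nodes id r)‖ ^ 2 / Q.weight r

/-- The Christoffel–Darboux kernel `K(x, ·)` of `L` with one real argument fixed, which attains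
equality in the Cauchy–Schwarz inequality `norm_aeval_sq_le` at `x`. -/
noncomputable def kernelPoly (x : ℝ) : ℝ[X] :=
  Lagrange.interpolate Q.nodes id fun r ↦ (Lagrange.basis Q.nodes id r).eval x / Q.weight r

lemma kernel_nonneg (z : ℂ) : 0 ≤ Q.kernel z :=
  Finset.sum_nonneg fun r hr ↦ div_nonneg (sq_nonneg _) (Q.weight_pos r hr).le

@[fun_prop]
lemma continuous_kernel : Continuous Q.kernel := by
  unfold kernel
  fun_prop

lemma kernel_ofReal (x : ℝ) :
    Q.kernel x = ∑ r ∈ Q.nodes, (Lagrange.basis Q.nodes id r).eval x ^ 2 / Q.weight r := by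
  refine Finset.sum_congr rfl fun r _ ↦ ?_
  rw [← Complex.coe_algebraMap, aeval_algebraMap_apply_eq_algebraMap_eval, Complex.coe_algebraMap,
    Complex.norm_real, norm_eq_abs, sq_abs]

lemma aeval_eq_sum_basis {f : ℝ[X]} (hf : f.natDegree < n) (z : ℂ) :
    aeval z f = ∑ r ∈ Q.nodes, ((f.eval r : ℝ) : ℂ) * aeval z (Lagrange.basis Q.nodes id r) := by
  have hdeg : f.degree < Q.nodes.card :=
    degree_le_natDegree.trans_lt (by rw [Q.card_nodes]; exact_mod_cast hf)
  conv_lhs => rw [Lagrange.eq_interpolate Function.injective_id.injOn hdeg]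
  simp [Lagrange.interpolate_apply]

lemma map_sq {f : ℝ[X]} (hf : f.natDegree < n) :
    L (f ^ 2) = ∑ r ∈ Q.nodes, Q.weight r * f.eval r ^ 2 := by
  rw [Q.map_eq_sum _ (by rw [natDegree_pow]; lia)]
  simp only [eval_pow]

lemma norm_aeval_sq_le {f : ℝ[X]} (hf : f.natDegree < n) (z : ℂ) :
    ‖aeval z f‖ ^ 2 ≤ L (f ^ 2) * Q.kernel z := by
  rw [Q.map_sq hf, Q.aeval_eq_sum_basis hf]
  refine (pow_le_pow_left₀ (norm_nonneg _) (norm_sum_le _ _) 2).trans ?_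
  refine Finset.sum_sq_le_sum_mul_sum_of_sq_le_mul _ (fun r hr ↦ ?_) (fun r hr ↦ ?_) fun r hr ↦ ?_
  · exact mul_nonneg (Q.weight_pos r hr).le (sq_nonneg _)
  · exact div_nonneg (sq_nonneg _) (Q.weight_pos r hr).le
  · have := (Q.weight_pos r hr).ne'
    rw [norm_mul, mul_pow, Complex.norm_real, norm_eq_abs, sq_abs]
    apply le_of_eq
    field_simp

lemma kernel_pos (hn : 0 < n) (z : ℂ) : 0 < Q.kernel z := by
  refine (Q.kernel_nonneg z).lt_of_ne' fun hzero ↦ ?_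
  have := Q.norm_aeval_sq_le (f := 1) (by simpa using hn) z
  norm_num [hzero] at this

lemma natDegree_kernelPoly_lt (hn : 0 < n) (x : ℝ) : (Q.kernelPoly x).natDegree < n := by
  rcases eq_or_ne (Q.kernelPoly x) 0 with hzero | hne
  · simpa [hzero] using hn
  · refine (natDegree_lt_iff_degree_lt hne).2 (lt_of_lt_of_eq ?_ (congrArg _ Q.card_nodes))
    exact Lagrange.degree_interpolate_lt _ Function.injective_id.injOn

lemma map_kernelPoly_sq (hn : 0 < n) (x : ℝ) : L (Q.kernelPoly x ^ 2) = Q.kernel x := by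
  rw [Q.map_sq (Q.natDegree_kernelPoly_lt hn x), Q.kernel_ofReal]
  refine Finset.sum_congr rfl fun r hr ↦ ?_
  have hnode : (Q.kernelPoly x).eval r = (Lagrange.basis Q.nodes id r).eval x / Q.weight r :=
    Lagrange.eval_interpolate_at_node (v := id) _ Function.injective_id.injOn hr
  have := (Q.weight_pos r hr).ne'
  rw [hnode]
  field_simp

-- The orthonormal bases `P j` and `ℓ_r / √w_r` of the polynomials of degree less than `n` are
-- related by an orthogonal matrix.
lemma sum_norm_aeval_sq_eq_kernel {P : ℕ → ℝ[X]} (hdeg : ∀ m, (P m).natDegree = m)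
    (horth : ∀ m k, L (P m * P k) = if m = k then 1 else 0) (z : ℂ) :
    ∑ j ∈ Finset.range n, ‖aeval z (P j)‖ ^ 2 = Q.kernel z := by
  let U : Matrix (Fin n) Q.nodes ℂ := .of fun j r ↦ ((P j).eval (r : ℝ) * √(Q.weight r) : ℝ)
  let y : Q.nodes → ℂ := fun r ↦ aeval z (Lagrange.basis Q.nodes id r) / (√(Q.weight r) : ℝ)
  have hsqrt (r : Q.nodes) : √(Q.weight r) ≠ 0 := (sqrt_pos.2 (Q.weight_pos r r.2)).ne'
  have hU : U * U.conjTranspose = 1 := by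
    ext i j
    have hij := horth i j
    rw [Q.map_eq_sum _ (natDegree_mul_le.trans_lt (by rw [hdeg, hdeg]; lia)),
      ← Finset.sum_coe_sort Q.nodes] at hij
    have hentry (r : Q.nodes) : U i r * star (U j r) =
        (Q.weight r * (P i * P j).eval (r : ℝ) : ℝ) := by
      simp only [U, Matrix.of_apply, Complex.star_def, Complex.conj_ofReal, eval_mul]
      rw [← Complex.ofReal_mul]
      nth_rw 3 [← mul_self_sqrt (Q.weight_pos r r.2).le]
      ring_nf
    simp_rw [Matrix.mul_apply, Matrix.conjTranspose_apply, hentry, ← Complex.ofReal_sum, hij,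
      Matrix.one_apply, Fin.val_inj]
    split_ifs <;> simp
  have hUy (j : Fin n) : U.mulVec y j = aeval z (P j) := by
    rw [Q.aeval_eq_sum_basis (by rw [hdeg]; exact j.2), ← Finset.sum_coe_sort Q.nodes]
    refine Finset.sum_congr rfl fun r _ ↦ ?_
    have : ((√(Q.weight r) : ℝ) : ℂ) ≠ 0 := mod_cast hsqrt r
    simp only [U, y, Matrix.of_apply]
    push_cast
    field_simp
  calc ∑ j ∈ Finset.range n, ‖aeval z (P j)‖ ^ 2 = ∑ j, ‖U.mulVec y j‖ ^ 2 := by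
        rw [← Fin.sum_univ_eq_sum_range (fun j ↦ ‖aeval z (P j)‖ ^ 2)]
        simp_rw [hUy]
    _ = ∑ r, ‖y r‖ ^ 2 :=
        sum_norm_sq_mulVec_of_mul_conjTranspose_eq_one (by simp [Q.card_nodes]) hU y
    _ = Q.kernel z := by
        rw [kernel, ← Finset.sum_coe_sort Q.nodes]
        refine Finset.sum_congr rfl fun r _ ↦ ?_
        rw [norm_div, Complex.norm_of_nonneg (sqrt_nonneg _), div_pow,
          sq_sqrt (Q.weight_pos r r.2).le]

lemma kernel_eq_norm_sq_mul_sum {x : ℝ} {z : ℂ} (hx : x ∉ Q.nodes)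
    (hz : ∀ r ∈ Q.nodes, z - r ≠ 0) :
    Q.kernel z =
      ‖aeval z (Lagrange.nodal Q.nodes id) / aeval (x : ℂ) (Lagrange.nodal Q.nodes id)‖ ^ 2 *
        ∑ r ∈ Q.nodes, (Lagrange.basis Q.nodes id r).eval x ^ 2 / Q.weight r *
          ‖(x - r) / (z - r)‖ ^ 2 := by
  rw [kernel, Finset.mul_sum]
  refine Finset.sum_congr rfl fun r hr ↦ ?_
  rw [aeval_basis_eq hr hx (hz r hr), norm_mul, norm_mul, Complex.norm_real, norm_eq_abs, mul_pow,
    mul_pow, sq_abs]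
  ring

lemma aeval_kernelPoly_eq_mul_sum {x : ℝ} {z : ℂ} (hx : x ∉ Q.nodes)
    (hz : ∀ r ∈ Q.nodes, z - r ≠ 0) :
    aeval z (Q.kernelPoly x) =
      aeval z (Lagrange.nodal Q.nodes id) / aeval (x : ℂ) (Lagrange.nodal Q.nodes id) *
        ∑ r ∈ Q.nodes, ((Lagrange.basis Q.nodes id r).eval x ^ 2 / Q.weight r : ℝ) *
          ((x - r) / (z - r)) := by
  rw [kernelPoly, Lagrange.interpolate_apply, map_sum, Finset.mul_sum]
  refine Finset.sum_congr rfl fun r hr ↦ ?_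
  rw [map_mul, aeval_C, aeval_basis_eq hr hx (hz r hr), Complex.coe_algebraMap]
  push_cast
  ring

lemma kernel_mul_kernel_le {x δ : ℝ} {z : ℂ} (hx : x ∉ Q.nodes) (hδ : δ ≤ 1)
    (hz : ∀ r ∈ Q.nodes, ‖(x : ℂ) - z‖ ≤ δ * ‖z - r‖) :
    (1 - δ) ^ 2 * (Q.kernel x * Q.kernel z) ≤
      (1 + δ) ^ 2 * ‖aeval z (Q.kernelPoly x)‖ ^ 2 := by
  have hz_ne : ∀ r ∈ Q.nodes, z - r ≠ 0 := fun r hr hzero ↦ by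
    have := hz r hr
    rw [hzero, norm_zero, mul_zero, norm_le_zero_iff, sub_eq_zero] at this
    exact hx (Complex.ofReal_inj.1 (this.trans (sub_eq_zero.1 hzero)) ▸ hr)
  have hratio : ∀ r ∈ Q.nodes, ‖((x : ℂ) - r) / (z - r) - 1‖ ≤ δ := fun r hr ↦ by
    rw [div_sub_one (hz_ne r hr), sub_sub_sub_cancel_right, norm_div,
      div_le_iff₀ (norm_pos_iff.2 (hz_ne r hr))]
    exact hz r hr
  have hreverse := sum_mul_sum_norm_sq_le_norm_sum_sq hδ
    (fun r hr ↦ div_nonneg (sq_nonneg ((Lagrange.basis Q.nodes id r).eval x))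
      (Q.weight_pos r hr).le) hratio
  rw [Q.kernel_eq_norm_sq_mul_sum hx hz_ne, Q.aeval_kernelPoly_eq_mul_sum hx hz_ne,
    Q.kernel_ofReal, norm_mul, mul_pow]
  rw [mul_left_comm (∑ r ∈ _, _), mul_left_comm, mul_left_comm ((1 + δ) ^ 2)]
  exact mul_le_mul_of_nonneg_left hreverse (sq_nonneg _)

end GaussQuadrature

section Concentration

lemma norm_exp_mul_I_sub_ofReal_sq (φ x : ℝ) :
    ‖Complex.exp (φ * Complex.I) - x‖ ^ 2 = 1 + x ^ 2 - 2 * x * cos φ := by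
  rw [← Complex.normSq_eq_norm_sq, Complex.normSq_apply, Complex.sub_re, Complex.sub_im,
    Complex.exp_ofReal_mul_I_re, Complex.exp_ofReal_mul_I_im, Complex.ofReal_re, Complex.ofReal_im]
  linear_combination sin_sq_add_cos_sq φ

lemma norm_exp_mul_I_sub_ofReal_sq_le {φ φ' x : ℝ} (hx : 0 ≤ x) (hcos : cos φ' ≤ cos φ) :
    ‖Complex.exp (φ * Complex.I) - x‖ ^ 2 ≤ ‖Complex.exp (φ' * Complex.I) - x‖ ^ 2 := by
  rw [norm_exp_mul_I_sub_ofReal_sq, norm_exp_mul_I_sub_ofReal_sq]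
  gcongr

/-- The factor by which `‖exp (φ * I) - x‖ ^ 2` with `a ≤ x ≤ b` decreases when `cos φ` grows by
`κ`. -/
noncomputable def contractionFactor (a b κ : ℝ) : ℝ := 1 - 2 * a * κ / (1 + b) ^ 2

variable {a b κ : ℝ}

lemma contractionFactor_nonneg (ha : 0 < a) (hab : a ≤ b) (hκ : κ ≤ 2) :
    0 ≤ contractionFactor a b κ := by
  have hb : 0 < 1 + b := by linarith
  rw [contractionFactor, sub_nonneg, div_le_one (by positivity)]
  nlinarith [sq_nonneg (1 - b)]

lemma contractionFactor_lt_one (ha : 0 < a) (hab : a ≤ b) (hκ : 0 < κ) :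
    contractionFactor a b κ < 1 := by
  have hb : 0 < 1 + b := by linarith
  rw [contractionFactor, sub_lt_self_iff]
  positivity

lemma norm_exp_mul_I_sub_ofReal_sq_le_contractionFactor_mul {φ φ' x : ℝ} (ha : 0 < a)
    (hx : x ∈ Set.Icc a b) (hκ : 0 ≤ κ) (hcos : κ ≤ cos φ - cos φ') :
    ‖Complex.exp (φ * Complex.I) - x‖ ^ 2 ≤
      contractionFactor a b κ * ‖Complex.exp (φ' * Complex.I) - x‖ ^ 2 := by
  have hx0 : 0 < x := ha.trans_le hx.1
  have hb : 0 < 1 + b := by linarith [hx.2]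
  have hle : ‖Complex.exp (φ' * Complex.I) - x‖ ^ 2 ≤ (1 + b) ^ 2 := by
    rw [norm_exp_mul_I_sub_ofReal_sq]
    nlinarith [neg_one_le_cos φ', hx.2]
  have hgain : 2 * a * κ / (1 + b) ^ 2 * ‖Complex.exp (φ' * Complex.I) - x‖ ^ 2 ≤ 2 * a * κ := by
    rw [div_mul_eq_mul_div, div_le_iff₀ (by positivity)]
    gcongr
  have hdrop : 2 * a * κ ≤ 2 * x * (cos φ - cos φ') := by
    gcongr
    exact hx.1
  have hdiff : ‖Complex.exp (φ * Complex.I) - x‖ ^ 2 =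
      ‖Complex.exp (φ' * Complex.I) - x‖ ^ 2 - 2 * x * (cos φ - cos φ') := by
    rw [norm_exp_mul_I_sub_ofReal_sq, norm_exp_mul_I_sub_ofReal_sq]
    ring
  rw [contractionFactor, one_sub_mul, hdiff]
  linarith

lemma norm_aeval_basis_sq (s : Finset ℝ) (r : ℝ) (z : ℂ) :
    ‖aeval z (Lagrange.basis s id r)‖ ^ 2 = ∏ j ∈ s.erase r, (r - j)⁻¹ ^ 2 * ‖z - j‖ ^ 2 := by
  rw [Lagrange.basis, map_prod, norm_prod, ← Finset.prod_pow]
  refine Finset.prod_congr rfl fun j _ ↦ ?_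
  simp [Lagrange.basisDivisor, mul_pow, -Complex.ofReal_sub]

-- Deleting the node `r` leaves at least `M` factors that contract by `q`.
lemma norm_aeval_basis_sq_le {s t : Finset ℝ} {r q : ℝ} {z z' : ℂ} {M : ℕ} (hq0 : 0 ≤ q)
    (hq1 : q ≤ 1) (hts : t ⊆ s) (hM : M < t.card) (hs : ∀ j ∈ s, ‖z - j‖ ^ 2 ≤ ‖z' - j‖ ^ 2)
    (ht : ∀ j ∈ t, ‖z - j‖ ^ 2 ≤ q * ‖z' - j‖ ^ 2) :
    ‖aeval z (Lagrange.basis s id r)‖ ^ 2 ≤ q ^ M * ‖aeval z' (Lagrange.basis s id r)‖ ^ 2 := by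
  have hcount : ∏ j ∈ s.erase r, (if j ∈ t then q else 1) ≤ q ^ M := by
    rw [← Finset.prod_filter, Finset.prod_const, Finset.filter_mem_eq_inter]
    refine pow_le_pow_of_le_one hq0 hq1 ?_
    have := Finset.pred_card_le_card_erase (s := t) (a := r)
    rw [Finset.erase_inter, Finset.inter_eq_right.2 hts]
    lia
  have hfactor : ∀ j ∈ s.erase r, (r - j)⁻¹ ^ 2 * ‖z - j‖ ^ 2 ≤
      (if j ∈ t then q else 1) * ((r - j)⁻¹ ^ 2 * ‖z' - j‖ ^ 2) := fun j hj ↦ by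
    rw [mul_left_comm]
    gcongr
    split_ifs with hjt
    · exact ht j hjt
    · simpa using hs j (Finset.mem_of_mem_erase hj)
  rw [norm_aeval_basis_sq, norm_aeval_basis_sq]
  refine (Finset.prod_le_prod (fun j _ ↦ by positivity) hfactor).trans ?_
  rw [Finset.prod_mul_distrib]
  gcongr

lemma GaussQuadrature.kernel_le_pow_mul_kernel {L : ℝ[X] →ₗ[ℝ] ℝ} {n : ℕ}
    (Q : GaussQuadrature L n) (hpos : ∀ r ∈ Q.nodes, 0 < r) {M : ℕ} (ha : 0 < a) (hab : a ≤ b)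
    (hM : M < (Q.nodes.filter (· ∈ Set.Icc a b)).card) {φ φ' : ℝ} (hκ0 : 0 ≤ κ) (hκ2 : κ ≤ 2)
    (hcos : κ ≤ cos φ - cos φ') :
    Q.kernel (Complex.exp (φ * Complex.I)) ≤
      contractionFactor a b κ ^ M * Q.kernel (Complex.exp (φ' * Complex.I)) := by
  have hle_one : contractionFactor a b κ ≤ 1 := sub_le_self _ (by positivity)
  rw [kernel, kernel, Finset.mul_sum]
  refine Finset.sum_le_sum fun r hr ↦ ?_
  rw [← mul_div_assoc]
  refine div_le_div_of_nonneg_right ?_ (Q.weight_pos r hr).le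
  refine norm_aeval_basis_sq_le (contractionFactor_nonneg ha hab hκ2) hle_one
    (Finset.filter_subset _ _) hM (fun j hj ↦ ?_) fun j hj ↦ ?_
  · exact norm_exp_mul_I_sub_ofReal_sq_le (hpos j hj).le (by linarith)
  · exact norm_exp_mul_I_sub_ofReal_sq_le_contractionFactor_mul ha (Finset.mem_filter.1 hj).2 hκ0
      hcos

lemma intervalIntegral_le_mul_of_forall_le_mul {g : ℝ → ℝ} (hg : Continuous g) {a b c d ε : ℝ}
    (hab : a ≤ b) (hcd : c < d)
    (hle : ∀ t ∈ Set.Icc a b, ∀ t' ∈ Set.Icc c d, g t ≤ ε * g t') :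
    ∫ t in a..b, g t ≤ (b - a) * (ε / (d - c) * ∫ t in c..d, g t) := by
  have hi (u v : ℝ) : IntervalIntegrable g volume u v := hg.intervalIntegrable u v
  have hpoint : ∀ t ∈ Set.Icc a b, g t ≤ ε / (d - c) * ∫ t' in c..d, g t' := fun t ht ↦ by
    have := intervalIntegral.integral_mono_on hcd.le (by simp) ((hi c d).const_mul ε) (hle t ht)
    rw [intervalIntegral.integral_const, intervalIntegral.integral_const_mul, smul_eq_mul] at this
    rw [div_mul_eq_mul_div, le_div_iff₀ (sub_pos.2 hcd)]
    linarith
  have := intervalIntegral.integral_mono_on hab (hi a b) (by simp) hpoint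
  rwa [intervalIntegral.integral_const, smul_eq_mul] at this

lemma cos_le_neg_cos_of_abs_sub_pi_le {φ θ : ℝ} (hθ : θ ≤ π) (hφ : |φ - π| ≤ θ) :
    cos φ ≤ -cos θ := by
  have := cos_le_cos_of_nonneg_of_le_pi (abs_nonneg _) hθ hφ
  rw [cos_abs, cos_sub_pi] at this
  linarith

lemma neg_cos_le_cos_of_le_abs_sub_pi {φ θ : ℝ} (hθ : 0 ≤ θ) (hφ : φ ∈ Set.Icc 0 (2 * π))
    (hle : θ ≤ |φ - π|) : -cos θ ≤ cos φ := by
  have := cos_le_cos_of_nonneg_of_le_pi hθ (abs_le.2 ⟨by linarith [hφ.1], by linarith [hφ.2]⟩) hle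
  rw [cos_abs, cos_sub_pi] at this
  linarith

-- Both arcs outside `[π - α, π + α]` are compared with `[π - α / 2, π + α / 2]`.
lemma integral_le_mul_integral_of_cos_concentrated {g : ℝ → ℝ} (hg : Continuous g)
    (hg0 : ∀ φ, 0 ≤ g φ) {α ε : ℝ} (hα0 : 0 < α) (hα : α ≤ π) (hε : 0 ≤ ε)
    (hle : ∀ φ φ', -cos α ≤ cos φ → cos φ' ≤ -cos (α / 2) → g φ ≤ ε * g φ') :
    ∫ φ in (0 : ℝ)..(2 * π), g φ ≤
      (1 + 2 * π / α * ε) * ∫ φ in (π - α)..(π + α), g φ := by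
  have hi (u v : ℝ) : IntervalIntegrable g volume u v := hg.intervalIntegrable u v
  set I := ∫ φ in (π - α)..(π + α), g φ
  have hfar (u v : ℝ) (huv : u ≤ v) (hlen : v - u ≤ π) (hu : 0 ≤ u) (hv : v ≤ 2 * π)
      (hdist : ∀ φ ∈ Set.Icc u v, α ≤ |φ - π|) :
      ∫ φ in u..v, g φ ≤ π * (ε / α * I) := by
    have hcompare := intervalIntegral_le_mul_of_forall_le_mul hg huv
      (show π - α / 2 < π + α / 2 by linarith) fun φ hφ φ' hφ' ↦ hle φ φ'
        (neg_cos_le_cos_of_le_abs_sub_pi hα0.le ⟨hu.trans hφ.1, hφ.2.trans hv⟩ (hdist φ hφ))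
        (cos_le_neg_cos_of_abs_sub_pi_le (by linarith)
          (abs_le.2 ⟨by linarith [hφ'.1], by linarith [hφ'.2]⟩))
    have hinner : ∫ φ in (π - α / 2)..(π + α / 2), g φ ≤ I :=
      intervalIntegral.integral_mono_interval (by linarith) (by linarith) (by linarith)
        (Eventually.of_forall hg0) (hi _ _)
    have hinner0 : 0 ≤ ∫ φ in (π - α / 2)..(π + α / 2), g φ :=
      intervalIntegral.integral_nonneg (by linarith) fun φ _ ↦ hg0 φ
    rw [show π + α / 2 - (π - α / 2) = α by ring] at hcompare
    exact hcompare.trans (by gcongr)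
  have hleft := hfar 0 (π - α) (by linarith) (by linarith) le_rfl (by linarith [pi_pos])
    fun φ hφ ↦ le_abs.2 (.inr (by linarith [hφ.2]))
  have hright := hfar (π + α) (2 * π) (by linarith) (by linarith) (by linarith [pi_pos]) le_rfl
    fun φ hφ ↦ le_abs.2 (.inl (by linarith [hφ.1]))
  rw [← intervalIntegral.integral_add_adjacent_intervals (hi 0 (π - α)) (hi _ (2 * π)),
    ← intervalIntegral.integral_add_adjacent_intervals (hi (π - α) (π + α)) (hi _ (2 * π))]
  calc _ ≤ π * (ε / α * I) + (I + π * (ε / α * I)) := by gcongr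
    _ = (1 + 2 * π / α * ε) * I := by ring

lemma GaussQuadrature.integral_kernel_le {L : ℝ[X] →ₗ[ℝ] ℝ} {n : ℕ} (Q : GaussQuadrature L n)
    (hpos : ∀ r ∈ Q.nodes, 0 < r) {M : ℕ} (ha : 0 < a) (hab : a ≤ b)
    (hM : M < (Q.nodes.filter (· ∈ Set.Icc a b)).card) {α : ℝ} (hα0 : 0 < α) (hα : α ≤ π) :
    ∫ φ in (0 : ℝ)..(2 * π), Q.kernel (Complex.exp (φ * Complex.I)) ≤
      (1 + 2 * π / α * contractionFactor a b (cos (α / 2) - cos α) ^ M) *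
        ∫ φ in (π - α)..(π + α), Q.kernel (Complex.exp (φ * Complex.I)) := by
  have hκ0 : 0 ≤ cos (α / 2) - cos α :=
    sub_nonneg.2 (cos_le_cos_of_nonneg_of_le_pi (by linarith) hα (by linarith))
  have hκ2 : cos (α / 2) - cos α ≤ 2 := by linarith [cos_le_one (α / 2), neg_one_le_cos α]
  refine integral_le_mul_integral_of_cos_concentrated (by fun_prop) (fun φ ↦ Q.kernel_nonneg _)
    hα0 hα (pow_nonneg (contractionFactor_nonneg ha hab hκ2) M) fun φ φ' hφ hφ' ↦ ?_
  exact Q.kernel_le_pow_mul_kernel hpos ha hab hM hκ0 hκ2 (by linarith)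

lemma norm_neg_one_sub_exp_mul_I_le (φ : ℝ) :
    ‖-1 - Complex.exp (φ * Complex.I)‖ ≤ |φ - π| := by
  have hshift : -1 - Complex.exp (φ * Complex.I) =
      Complex.exp (Complex.I * ((φ - π : ℝ) : ℂ)) - 1 := by
    rw [Complex.ofReal_sub, mul_sub, Complex.exp_sub, mul_comm Complex.I π, Complex.exp_pi_mul_I,
      mul_comm]
    ring
  rw [hshift]
  exact norm_exp_I_mul_ofReal_sub_one_le

lemma GaussQuadrature.kernel_neg_one_mul_kernel_le {L : ℝ[X] →ₗ[ℝ] ℝ} {n : ℕ}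
    (Q : GaussQuadrature L n) (hpos : ∀ r ∈ Q.nodes, 0 < r) {α φ : ℝ} (hα : α ≤ 1 / 2)
    (hφ : |φ - π| ≤ α) :
    (1 - 2 * α) ^ 2 * (Q.kernel (-1) * Q.kernel (Complex.exp (φ * Complex.I))) ≤
      (1 + 2 * α) ^ 2 * ‖aeval (Complex.exp (φ * Complex.I)) (Q.kernelPoly (-1))‖ ^ 2 := by
  set z := Complex.exp (φ * Complex.I)
  have hα0 : 0 ≤ α := (abs_nonneg _).trans hφ
  have hz : ‖-1 - z‖ ≤ α := (norm_neg_one_sub_exp_mul_I_le φ).trans hφ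
  have hdist : ∀ r ∈ Q.nodes, 1 - α ≤ ‖z - r‖ := fun r hr ↦ by
    have hr0 := hpos r hr
    have htri := norm_sub_norm_le ((-1 - r : ℝ) : ℂ) (-1 - z)
    rw [Complex.norm_real, norm_of_nonpos (by linarith), Complex.ofReal_sub, Complex.ofReal_neg,
      Complex.ofReal_one, sub_sub_sub_cancel_left] at htri
    linarith
  have := Q.kernel_mul_kernel_le (x := -1) (δ := 2 * α) (z := z)
    (fun h ↦ by linarith [hpos _ h]) (by linarith) fun r hr ↦ by
      have := hdist r hr
      rw [Complex.ofReal_neg, Complex.ofReal_one]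
      nlinarith
  rwa [Complex.ofReal_neg, Complex.ofReal_one] at this

end Concentration

section Moments

variable {μ : Measure ℝ}

/-- The linear extension of `X ^ k ↦ ∫ x, x ^ k ∂μ`. It is integration against `μ` when all moments
exist; through the moments it is linear with no integrability condition. -/
noncomputable def momentFunctional (μ : Measure ℝ) : ℝ[X] →ₗ[ℝ] ℝ :=
  lsum fun k ↦ LinearMap.toSpanSingleton ℝ ℝ (∫ x, x ^ k ∂μ)

lemma integrable_eval (hint : ∀ k : ℕ, Integrable (fun x ↦ x ^ k) μ) (p : ℝ[X]) :
    Integrable (fun x ↦ p.eval x) μ := by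
  simp_rw [eval_eq_sum_range]
  exact integrable_finsetSum _ fun k _ ↦ (hint k).const_mul _

lemma momentFunctional_apply (hint : ∀ k : ℕ, Integrable (fun x ↦ x ^ k) μ) (p : ℝ[X]) :
    momentFunctional μ p = ∫ x, p.eval x ∂μ := by
  simp_rw [eval_eq_sum_range]
  rw [integral_finsetSum _ fun k _ ↦ (hint k).const_mul _, momentFunctional, lsum_apply,
    sum_over_range _ (by simp)]
  simp [integral_const_mul]

lemma strictlyPositiveOn_momentFunctional {S : Set ℝ}
    (hint : ∀ k : ℕ, Integrable (fun x ↦ x ^ k) μ) (hS : ∀ᵐ x ∂μ, x ∈ S)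
    (hsupp : μ.support.Infinite) : StrictlyPositiveOn S (momentFunctional μ) := by
  intro p hp hnonneg
  rw [momentFunctional_apply hint,
    integral_pos_iff_support_of_nonneg_ae (hS.mono hnonneg) (integrable_eval hint p)]
  obtain ⟨x, hx, hroot⟩ := hsupp.exists_notMem_finset p.roots.toFinset
  rw [Multiset.mem_toFinset, mem_roots hp] at hroot
  exact (μ.mem_support_iff_forall x).1 hx _
    ((isOpen_ne.preimage p.continuous).mem_nhds hroot)

lemma integrable_pow_of_integrable_exp_sqrt (hnonneg : ∀ᵐ x ∂μ, 0 ≤ x)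
    (hexp : Integrable (fun x ↦ exp √x) μ) (k : ℕ) : Integrable (fun x ↦ x ^ k) μ := by
  refine (hexp.const_mul ((2 * k).factorial : ℝ)).mono' (by fun_prop) ?_
  filter_upwards [hnonneg] with x hx
  have := pow_div_factorial_le_exp √x (sqrt_nonneg x) (2 * k)
  rw [pow_mul, sq_sqrt hx, div_le_iff₀' (by positivity)] at this
  rwa [norm_of_nonneg (by positivity)]

end Moments

section CosineTransform

/-- The Taylor polynomial of `x ↦ cos (t * √x)` with `m` terms. -/
noncomputable def cosSqrtTaylor (t : ℝ) (m : ℕ) : ℝ[X] :=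
  ∑ k ∈ Finset.range m, C ((-1) ^ k * t ^ (2 * k) / (2 * k).factorial) * X ^ k

lemma natDegree_cosSqrtTaylor_le (t : ℝ) (m : ℕ) : (cosSqrtTaylor t m).natDegree ≤ m :=
  natDegree_sum_le_of_forall_le _ _ fun k hk ↦
    (natDegree_C_mul_X_pow_le _ k).trans (Finset.mem_range.1 hk).le

lemma sum_range_mul_iteratedDeriv_cos_zero (f : ℕ → ℝ) (m : ℕ) :
    ∑ k ∈ Finset.range (2 * m), f k * iteratedDeriv k cos 0 =
      ∑ k ∈ Finset.range m, f (2 * k) * (-1) ^ k := by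
  induction m with
  | zero => simp
  | succ m ih =>
    rw [mul_add_one, Finset.sum_range_succ, Finset.sum_range_succ, Finset.sum_range_succ _ m, ih]
    simp

lemma abs_cos_sub_sum_le (y : ℝ) {m : ℕ} (hm : m ≠ 0) :
    |cos y - ∑ k ∈ Finset.range m, (-1) ^ k * y ^ (2 * k) / (2 * k).factorial| ≤
      y ^ (2 * m) / (2 * m).factorial := by
  obtain ⟨m, rfl⟩ := Nat.exists_eq_succ_of_ne_zero hm
  rcases eq_or_ne 0 y with rfl | hy
  · simp [Finset.sum_range_succ']
  obtain ⟨ξ, -, h_remainder⟩ := taylor_mean_remainder_lagrange_iteratedDeriv (n := 2 * m + 1) hy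
    contDiff_cos.contDiffOn
  have hterm (k : ℕ) : iteratedDerivWithin k cos (Set.uIcc 0 y) 0 = iteratedDeriv k cos 0 :=
    iteratedDerivWithin_eq_iteratedDeriv (uniqueDiffOn_uIcc hy) contDiff_cos.contDiffAt
      Set.left_mem_uIcc
  have htaylor : taylorWithinEval cos (2 * m + 1) (Set.uIcc 0 y) 0 y =
      ∑ k ∈ Finset.range (m + 1), (-1) ^ k * y ^ (2 * k) / (2 * k).factorial := by
    rw [taylor_within_apply, show 2 * m + 1 + 1 = 2 * (m + 1) by ring]
    simp_rw [hterm, smul_eq_mul, sub_zero, sum_range_mul_iteratedDeriv_cos_zero]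
    exact Finset.sum_congr rfl fun k _ ↦ by ring
  rw [← htaylor, h_remainder, sub_zero, abs_div, abs_mul, Nat.abs_cast,
    abs_of_nonneg (Even.pow_nonneg (by simp [parity_simps]) y),
    show 2 * (m + 1) = 2 * m + 1 + 1 by ring]
  gcongr
  exact mul_le_of_le_one_left (Even.pow_nonneg (by simp [parity_simps]) y)
    (abs_iteratedDeriv_cos_le_one _ _)

lemma abs_cos_sqrt_sub_eval_le (t : ℝ) {x : ℝ} (hx : 0 ≤ x) {m : ℕ} (hm : m ≠ 0) :
    |cos (t * √x) - (cosSqrtTaylor t m).eval x| ≤ t ^ (2 * m) / (2 * m).factorial * x ^ m := by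
  have hpow (k : ℕ) : (t * √x) ^ (2 * k) = t ^ (2 * k) * x ^ k := by
    rw [mul_pow, pow_mul √x, sq_sqrt hx]
  have := abs_cos_sub_sum_le (t * √x) hm
  simp_rw [hpow] at this
  simpa [cosSqrtTaylor, eval_finsetSum, mul_div_right_comm, mul_assoc] using this

lemma abs_integral_cos_sqrt_sub_le {ν : Measure ℝ} (hnonneg : ∀ᵐ x ∂ν, 0 ≤ x)
    (hint : ∀ k : ℕ, Integrable (fun x ↦ x ^ k) ν) (t : ℝ) {m : ℕ} (hm : m ≠ 0) :
    |∫ x, cos (t * √x) ∂ν - ∫ x, (cosSqrtTaylor t m).eval x ∂ν| ≤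
      t ^ (2 * m) / (2 * m).factorial * ∫ x, x ^ m ∂ν := by
  have : IsFiniteMeasure ν :=
    (integrable_const_iff_isFiniteMeasure one_ne_zero).1 (by simpa only [pow_zero] using hint 0)
  have hcos : Integrable (fun x ↦ cos (t * √x)) ν :=
    (integrable_const (1 : ℝ)).mono' (by fun_prop) (ae_of_all _ fun x ↦ abs_cos_le_one _)
  rw [← integral_sub hcos (integrable_eval hint _), ← integral_const_mul]
  refine (abs_integral_le_integral_abs).trans (integral_mono_ae
    (hcos.sub (integrable_eval hint _)).abs ((hint m).const_mul _) ?_)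
  filter_upwards [hnonneg] with x hx
  exact abs_cos_sqrt_sub_eval_le t hx hm

lemma tendsto_pow_div_factorial_mul_integral {μ : Measure ℝ} (hnonneg : ∀ᵐ x ∂μ, 0 ≤ x)
    (hexp : ∀ c : ℝ, Integrable (fun x ↦ exp (c * √x)) μ) (t : ℝ) :
    Tendsto (fun m : ℕ ↦ t ^ (2 * m) / (2 * m).factorial * ∫ x, x ^ m ∂μ) atTop (𝓝 0) := by
  have hdom : Tendsto (fun m : ℕ ↦ ∫ x, t ^ (2 * m) / (2 * m).factorial * x ^ m ∂μ) atTop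
      (𝓝 (∫ _, 0 ∂μ)) := by
    have hpow {x : ℝ} (hx : 0 ≤ x) (m : ℕ) : t ^ (2 * m) / (2 * m).factorial * x ^ m =
        (|t| * √x) ^ (2 * m) / (2 * m).factorial := by
      rw [mul_pow, pow_mul √x, sq_sqrt hx, (even_two_mul m).pow_abs]
      ring
    refine tendsto_integral_of_dominated_convergence (fun x ↦ exp (|t| * √x)) (by fun_prop)
      (hexp |t|) (fun m ↦ ?_) ?_
    · filter_upwards [hnonneg] with x hx
      rw [hpow hx, norm_of_nonneg (by positivity)]
      exact pow_div_factorial_le_exp _ (by positivity) _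
    · filter_upwards [hnonneg] with x hx
      simp_rw [hpow hx]
      exact (FloorSemiring.tendsto_pow_div_factorial_atTop _).comp
        (tendsto_id.const_mul_atTop' two_pos)
  simpa [integral_const_mul] using hdom

end CosineTransform

section SymmetrizedSqrt

/-- The law of `±√x` with independent signs when `x` is distributed according to the normalization
of `ν`; its characteristic function is a cosine transform of `ν`. -/
noncomputable def symmSqrt (ν : Measure ℝ) : Measure ℝ :=
  (2 * ν Set.univ)⁻¹ • (ν.map (√·) + ν.map fun x ↦ -√x)

variable {ν : Measure ℝ}

lemma isProbabilityMeasure_symmSqrt [IsFiniteMeasure ν] (hν : ν ≠ 0) :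
    IsProbabilityMeasure (symmSqrt ν) := by
  refine ⟨?_⟩
  have hmass : ν Set.univ ≠ 0 := Measure.measure_univ_ne_zero.2 hν
  rw [symmSqrt, Measure.smul_apply, Measure.add_apply, Measure.map_apply (by fun_prop) .univ,
    Measure.map_apply (by fun_prop) .univ, Set.preimage_univ, Set.preimage_univ, ← two_mul,
    smul_eq_mul]
  exact ENNReal.inv_mul_cancel (by simpa using hmass) (by finiteness)

lemma charFun_symmSqrt [IsFiniteMeasure ν] (t : ℝ) :
    charFun (symmSqrt ν) t = (((ν.real Set.univ)⁻¹ * ∫ x, cos (t * √x) ∂ν : ℝ) : ℂ) := by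
  have hint (f : ℝ → ℝ) (hf : Measurable f) :
      Integrable (fun x ↦ Complex.exp (t * f x * Complex.I)) ν :=
    (integrable_const (1 : ℝ)).mono' (by fun_prop) (ae_of_all _ fun x ↦ by
      rw [← Complex.ofReal_mul, Complex.norm_exp_ofReal_mul_I])
  have hmap (f : ℝ → ℝ) (hf : Measurable f) :
      Integrable (fun x : ℝ ↦ Complex.exp (t * x * Complex.I)) (ν.map f) :=
    (integrable_map_measure (by fun_prop) hf.aemeasurable).2 (hint f hf)
  rw [charFun_apply_real, symmSqrt, integral_smul_measure,
    integral_add_measure (hmap _ (by fun_prop)) (hmap _ (by fun_prop)),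
    integral_map (by fun_prop) (by fun_prop), integral_map (by fun_prop) (by fun_prop),
    ← integral_add (hint _ (by fun_prop)) (hint _ (by fun_prop)), ENNReal.toReal_inv,
    ENNReal.toReal_mul, ENNReal.toReal_ofNat, ← measureReal_def, Complex.ofReal_mul,
    ← integral_complex_ofReal]
  have hcos (x : ℝ) : Complex.exp (t * √x * Complex.I) + Complex.exp (t * (-√x : ℝ) * Complex.I) =
      2 * (cos (t * √x) : ℝ) := by
    rw [Complex.ofReal_cos, Complex.two_cos, Complex.ofReal_mul, Complex.ofReal_neg, mul_neg]
  simp_rw [hcos, integral_const_mul]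
  rw [Complex.real_smul]
  push_cast
  ring

lemma symmSqrt_preimage_sq {U : Set ℝ} (hU : IsOpen U) (hpos : U ⊆ Set.Ioi 0) :
    symmSqrt ν (Set.Ioi 0 ∩ (· ^ 2) ⁻¹' U) = (2 * ν Set.univ)⁻¹ * ν U := by
  have hmeas : MeasurableSet (Set.Ioi (0 : ℝ) ∩ (· ^ 2) ⁻¹' U) :=
    measurableSet_Ioi.inter (hU.measurableSet.preimage (by fun_prop))
  have hsqrt : (√·) ⁻¹' (Set.Ioi 0 ∩ (· ^ 2) ⁻¹' U) = U := by
    ext x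
    refine ⟨fun ⟨hx, hxU⟩ ↦ ?_, fun hx ↦ ?_⟩
    · simpa [sq_sqrt (sqrt_pos.1 hx).le] using hxU
    · simpa [sq_sqrt (hpos hx).le, hx] using hpos hx
  have hneg : (fun x ↦ -√x) ⁻¹' (Set.Ioi 0 ∩ (· ^ 2) ⁻¹' U) = ∅ :=
    Set.eq_empty_of_forall_notMem fun x hx ↦ (neg_nonpos.2 (sqrt_nonneg x)).not_gt hx.1
  rw [symmSqrt, Measure.smul_apply, Measure.add_apply, Measure.map_apply (by fun_prop) hmeas,
    Measure.map_apply (by fun_prop) hmeas, hsqrt, hneg, measure_empty, add_zero, smul_eq_mul]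

lemma eventually_measure_pos_of_tendsto_integral_cos_sqrt {ν : ℕ → Measure ℝ} {μ : Measure ℝ}
    [IsFiniteMeasure μ] [∀ n, IsFiniteMeasure (ν n)]
    (hmass : ∀ n, (ν n) Set.univ = μ Set.univ)
    (hcos : ∀ t : ℝ, Tendsto (fun n ↦ ∫ x, cos (t * √x) ∂ν n) atTop (𝓝 (∫ x, cos (t * √x) ∂μ)))
    {U : Set ℝ} (hU : IsOpen U) (hpos : U ⊆ Set.Ioi 0) (hμU : 0 < μ U) :
    ∀ᶠ n in atTop, 0 < ν n U := by
  have hμ : μ ≠ 0 := by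
    rintro rfl
    simp at hμU
  have hν (n : ℕ) : ν n ≠ 0 := by
    rwa [← Measure.measure_univ_ne_zero, hmass, Measure.measure_univ_ne_zero]
  let ρ (n : ℕ) : ProbabilityMeasure ℝ := ⟨symmSqrt (ν n), isProbabilityMeasure_symmSqrt (hν n)⟩
  let ρ₀ : ProbabilityMeasure ℝ := ⟨symmSqrt μ, isProbabilityMeasure_symmSqrt hμ⟩
  have hweak : Tendsto ρ atTop (𝓝 ρ₀) := by
    refine ProbabilityMeasure.tendsto_of_tendsto_charFun fun t ↦ ?_
    simp_rw [ρ, ρ₀, ProbabilityMeasure.coe_mk, charFun_symmSqrt, measureReal_def, hmass]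
    exact (Complex.continuous_ofReal.tendsto _).comp ((hcos t).const_mul _)
  have hliminf := ProbabilityMeasure.le_liminf_measure_open_of_tendsto hweak
    ((isOpen_Ioi (a := 0)).inter (hU.preimage (continuous_pow 2)))
  simp_rw [ρ, ρ₀, ProbabilityMeasure.coe_mk, symmSqrt_preimage_sq hU hpos, hmass] at hliminf
  have hlim_pos : 0 < (2 * μ Set.univ)⁻¹ * μ U :=
    ENNReal.mul_pos (ENNReal.inv_ne_zero.2 (by finiteness)) hμU.ne'
  filter_upwards [eventually_lt_of_lt_liminf (hlim_pos.trans_le hliminf)] with n hn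
  exact pos_of_ne_zero (right_ne_zero_of_mul hn.ne')

end SymmetrizedSqrt

namespace GaussQuadrature

variable {L : ℝ[X] →ₗ[ℝ] ℝ} {n : ℕ} (Q : GaussQuadrature L n)

/-- The discrete measure with the masses `Q.weight r` at the nodes `r`. -/
noncomputable def measure : Measure ℝ :=
  ∑ r ∈ Q.nodes, ENNReal.ofReal (Q.weight r) • Measure.dirac r

lemma integrable_measure (f : ℝ → ℝ) : Integrable f Q.measure :=
  integrable_finsetSum_measure.2 fun _ _ ↦ (integrable_dirac (by simp)).smul_measure (by finiteness)

instance : IsFiniteMeasure Q.measure :=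
  (integrable_const_iff_isFiniteMeasure one_ne_zero).1 (Q.integrable_measure fun _ ↦ (1 : ℝ))

lemma integral_measure (f : ℝ → ℝ) : ∫ x, f x ∂Q.measure = ∑ r ∈ Q.nodes, Q.weight r * f r := by
  rw [measure, integral_finsetSum_measure fun r _ ↦
    (integrable_dirac (by simp)).smul_measure (by finiteness)]
  refine Finset.sum_congr rfl fun r hr ↦ ?_
  rw [integral_smul_measure, integral_dirac, ENNReal.toReal_ofReal (Q.weight_pos r hr).le,
    smul_eq_mul]

lemma integral_eval_measure {f : ℝ[X]} (hf : f.natDegree < 2 * n) :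
    ∫ x, f.eval x ∂Q.measure = L f := by
  rw [integral_measure, Q.map_eq_sum f hf]

lemma ae_measure {p : ℝ → Prop} (hp : ∀ r ∈ Q.nodes, p r) : ∀ᵐ x ∂Q.measure, p x := by
  rw [measure, ae_finsetSum_measure_iff]
  exact fun r hr ↦ Measure.ae_smul_measure (by simpa using hp r hr) _

lemma exists_mem_of_measure_pos {U : Set ℝ} (hU : 0 < Q.measure U) : ∃ r ∈ Q.nodes, r ∈ U := by
  by_contra! h
  exact hU.ne' (measure_eq_zero_iff_ae_notMem.2 (Q.ae_measure h))

end GaussQuadrature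

section NodeAccumulation

variable {μ : Measure ℝ} {Q : ∀ n, GaussQuadrature (momentFunctional μ) (n + 1)}

-- Cosine transforms are compared through Taylor polynomials, which the quadrature integrates
-- exactly up to degree `2 * n + 1`.
lemma tendsto_integral_cos_sqrt_measure (hnonneg : ∀ᵐ x ∂μ, 0 ≤ x)
    (hexp : ∀ c : ℝ, Integrable (fun x ↦ exp (c * √x)) μ)
    (hnodes : ∀ n, ∀ r ∈ (Q n).nodes, 0 < r) (t : ℝ) :
    Tendsto (fun n ↦ ∫ x, cos (t * √x) ∂(Q n).measure) atTop (𝓝 (∫ x, cos (t * √x) ∂μ)) := by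
  have hint := integrable_pow_of_integrable_exp_sqrt hnonneg (by simpa using hexp 1)
  rw [tendsto_iff_dist_tendsto_zero]
  have hrem := ((tendsto_pow_div_factorial_mul_integral hnonneg hexp t).comp
    (tendsto_add_atTop_nat 1)).const_mul 2
  rw [mul_zero] at hrem
  refine squeeze_zero (fun _ ↦ dist_nonneg) (fun n ↦ ?_) hrem
  have hμ := abs_integral_cos_sqrt_sub_le hnonneg hint t n.add_one_ne_zero
  have hQ := abs_integral_cos_sqrt_sub_le
    ((Q n).ae_measure fun r hr ↦ (hnodes n r hr).le) (fun k ↦ (Q n).integrable_measure _) t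
    n.add_one_ne_zero
  have hpow : ∫ x, x ^ (n + 1) ∂(Q n).measure = ∫ x, x ^ (n + 1) ∂μ := by
    have := (Q n).integral_eval_measure (f := X ^ (n + 1)) (by rw [natDegree_X_pow]; lia)
    simpa [momentFunctional_apply hint] using this
  rw [hpow, (Q n).integral_eval_measure
    ((natDegree_cosSqrtTaylor_le t _).trans_lt (by lia)), momentFunctional_apply hint] at hQ
  rw [Real.dist_eq]
  refine (abs_sub_le _ (∫ x, (cosSqrtTaylor t (n + 1)).eval x ∂μ) _).trans ?_
  rw [abs_sub_comm _ (∫ x, cos (t * √x) ∂μ)]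
  exact (add_le_add hQ hμ).trans_eq (two_mul _).symm

lemma eventually_exists_mem_nodes (hnonneg : ∀ᵐ x ∂μ, 0 ≤ x)
    (hexp : ∀ c : ℝ, Integrable (fun x ↦ exp (c * √x)) μ)
    (hnodes : ∀ n, ∀ r ∈ (Q n).nodes, 0 < r)
    {U : Set ℝ} (hU : IsOpen U) (hpos : U ⊆ Set.Ioi 0) (hμU : 0 < μ U) :
    ∀ᶠ n in atTop, ∃ r ∈ (Q n).nodes, r ∈ U := by
  have hint := integrable_pow_of_integrable_exp_sqrt hnonneg (by simpa using hexp 1)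
  have : IsFiniteMeasure μ :=
    (integrable_const_iff_isFiniteMeasure one_ne_zero).1 (by simpa only [pow_zero] using hint 0)
  have hmass (n : ℕ) : (Q n).measure Set.univ = μ Set.univ := by
    have := (Q n).integral_eval_measure (f := 1) (by simp)
    simpa [momentFunctional_apply hint, measureReal_def, ENNReal.toReal_eq_toReal_iff'] using this
  exact (eventually_measure_pos_of_tendsto_integral_cos_sqrt hmass
    (tendsto_integral_cos_sqrt_measure hnonneg hexp hnodes) hU hpos hμU).mono
      fun n ↦ (Q n).exists_mem_of_measure_pos

lemma eventually_lt_card_nodes_filter (hnonneg : ∀ᵐ x ∂μ, 0 ≤ x)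
    (hexp : ∀ c : ℝ, Integrable (fun x ↦ exp (c * √x)) μ)
    (hnodes : ∀ n, ∀ r ∈ (Q n).nodes, 0 < r)
    {a b : ℝ} (ha : 0 < a) (hsupp : (μ.support ∩ Set.Ioo a b).Infinite) (M : ℕ) :
    ∀ᶠ n in atTop, M < ((Q n).nodes.filter (· ∈ Set.Icc a b)).card := by
  obtain ⟨T, hT, hcard⟩ := hsupp.exists_subset_card_eq (M + 1)
  obtain ⟨U, hU, hdisj⟩ := (T : Set ℝ).toFinite.t2_separation
  have hnode (x : ℝ) (hx : x ∈ T) :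
      ∀ᶠ n in atTop, ∃ r ∈ (Q n).nodes, r ∈ U x ∩ Set.Ioo a b :=
    eventually_exists_mem_nodes hnonneg hexp hnodes ((hU x).2.inter isOpen_Ioo)
      (fun y hy ↦ ha.trans hy.2.1) ((μ.mem_support_iff_forall x).1 (hT hx).1 _
        (((hU x).2.inter isOpen_Ioo).mem_nhds ⟨(hU x).1, (hT hx).2⟩))
  filter_upwards [(Filter.eventually_all_finset T).2 hnode] with n hn
  choose! r hr hrU using hn
  refine Nat.lt_of_succ_le (hcard.symm.trans_le (Finset.card_le_card_of_injOn r (fun x hx ↦ ?_) ?_))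
  · exact Finset.mem_filter.2 ⟨hr x hx, Set.Ioo_subset_Icc_self (hrU x hx).2⟩
  · intro x hx y hy hxy
    by_contra hne
    exact (hdisj hx hy hne).le_bot ⟨(hrU x hx).1, hxy ▸ (hrU y hy).1⟩

end NodeAccumulation

section HankelRayleigh

lemma posSemidef_sub_smul_one_of_mem_lowerBounds_eigenvalues {ι : Type*} [Fintype ι] [DecidableEq ι]
    {A : Matrix ι ι ℝ} (hA : A.IsHermitian) {lam : ℝ}
    (hlam : lam ∈ lowerBounds {x | Module.End.HasEigenvalue (Matrix.toLin' A) x}) :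
    (A - lam • (1 : Matrix ι ι ℝ)).PosSemidef := by
  refine Matrix.posSemidef_iff_isHermitian_and_spectrum_nonneg.2
    ⟨hA.sub (Matrix.isHermitian_one.smul (.all lam)), fun x hx ↦ ?_⟩
  have hmem : x + lam ∈ spectrum ℝ A :=
    spectrum.add_mem_iff.2 (by rwa [neg_add_eq_sub, Algebra.algebraMap_eq_smul_one])
  rw [← Matrix.spectrum_toLin', ← Module.End.hasEigenvalue_iff_mem_spectrum] at hmem
  exact le_add_iff_nonneg_left lam |>.1 (hlam hmem)

lemma mul_dotProduct_self_le_of_mem_lowerBounds_eigenvalues {ι : Type*} [Fintype ι] [DecidableEq ι]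
    {A : Matrix ι ι ℝ} (hA : A.IsHermitian) {lam : ℝ}
    (hlam : lam ∈ lowerBounds {x | Module.End.HasEigenvalue (Matrix.toLin' A) x}) (v : ι → ℝ) :
    lam * (v ⬝ᵥ v) ≤ v ⬝ᵥ A.mulVec v := by
  have hpsd := posSemidef_sub_smul_one_of_mem_lowerBounds_eigenvalues hA hlam
  have hnonneg := hpsd.dotProduct_mulVec_nonneg v
  rwa [Matrix.sub_mulVec, Matrix.smul_mulVec, Matrix.one_mulVec, star_trivial, dotProduct_sub,
    dotProduct_smul, smul_eq_mul, sub_nonneg] at hnonneg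

lemma integral_norm_aeval_exp_mul_I_sq {f : ℝ[X]} {n : ℕ} (hf : f.natDegree < n) :
    ∫ φ in (0 : ℝ)..2 * π, ‖aeval (Complex.exp (φ * Complex.I)) f‖ ^ 2
      = 2 * π * (toFn n f ⬝ᵥ toFn n f) := by
  have hparseval := sum_sq_norm_coeff_eq_circleAverage (f.map (algebraMap ℝ ℂ))
  have hcoeff : ∑ i ∈ (f.map (algebraMap ℝ ℂ)).support, ‖(f.map (algebraMap ℝ ℂ)).coeff i‖ ^ 2
      = toFn n f ⬝ᵥ toFn n f :=
    calc _ = (f.map (algebraMap ℝ ℂ)).sum fun _ c ↦ ‖c‖ ^ 2 := rfl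
      _ = ∑ i ∈ Finset.range n, f.coeff i * f.coeff i := by
        rw [sum_over_range' _ (by simp) n (by rwa [natDegree_map])]
        simp [coeff_map, sq]
      _ = _ := Finset.sum_range fun i ↦ f.coeff i * f.coeff i
  rw [hcoeff, circleAverage_def] at hparseval
  simp only [circleMap_zero, Complex.ofReal_one, one_mul, eval_map_algebraMap, smul_eq_mul]
    at hparseval
  rw [hparseval, mul_inv_cancel_left₀ two_pi_pos.ne']

variable {L : ℝ[X] →ₗ[ℝ] ℝ} {n : ℕ} {H : Matrix (Fin n) (Fin n) ℝ} {lam : ℝ}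

lemma isHermitian_of_hankel (hH : ∀ j k : Fin n, H j k = L (X ^ (j + k : ℕ))) : H.IsHermitian := by
  ext j k
  rw [Matrix.conjTranspose_apply, star_trivial, hH, hH, add_comm]

lemma map_ofFn_sq_of_hankel (hH : ∀ j k : Fin n, H j k = L (X ^ (j + k : ℕ))) (v : Fin n → ℝ) :
    L (ofFn n v ^ 2) = v ⬝ᵥ H.mulVec v := by
  rw [ofFn_eq_sum_monomial, sq, Finset.sum_mul_sum]
  simp only [map_sum, dotProduct, Matrix.mulVec, Finset.mul_sum]
  refine Finset.sum_congr rfl fun i _ ↦ Finset.sum_congr rfl fun j _ ↦ ?_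
  rw [hH, monomial_mul_monomial, ← smul_X_eq_monomial, map_smul, smul_eq_mul]
  ring

lemma mul_integral_norm_aeval_sq_le_map_sq (hH : ∀ j k : Fin n, H j k = L (X ^ (j + k : ℕ)))
    (hlam : lam ∈ lowerBounds {x | Module.End.HasEigenvalue (Matrix.toLin' H) x}) {f : ℝ[X]}
    (hf : f.natDegree < n) :
    lam / (2 * π) * ∫ φ in (0 : ℝ)..2 * π, ‖aeval (Complex.exp (φ * Complex.I)) f‖ ^ 2
      ≤ L (f ^ 2) := by
  have hrayleigh := mul_dotProduct_self_le_of_mem_lowerBounds_eigenvalues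
    (isHermitian_of_hankel hH) hlam (toFn n f)
  rw [← map_ofFn_sq_of_hankel hH, ofFn_comp_toFn_eq_id_of_natDegree_lt hf] at hrayleigh
  rwa [integral_norm_aeval_exp_mul_I_sq hf, ← mul_assoc, div_mul_cancel₀ _ two_pi_pos.ne']

lemma exists_mul_integral_norm_aeval_sq_eq_map_sq
    (hH : ∀ j k : Fin n, H j k = L (X ^ (j + k : ℕ))) (hn : 0 < n)
    (hlam : Module.End.HasEigenvalue (Matrix.toLin' H) lam) :
    ∃ f : ℝ[X], f ≠ 0 ∧ f.natDegree < n ∧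
      lam / (2 * π) * ∫ φ in (0 : ℝ)..2 * π, ‖aeval (Complex.exp (φ * Complex.I)) f‖ ^ 2
        = L (f ^ 2) := by
  obtain ⟨v, hv⟩ := hlam.exists_hasEigenvector
  have hdeg := ofFn_natDegree_lt hn v
  refine ⟨ofFn n v, fun h ↦ hv.2 (injective_ofFn n (h.trans (map_zero _).symm)), hdeg, ?_⟩
  rw [integral_norm_aeval_exp_mul_I_sq hdeg, toFn_comp_ofFn_eq_id, ← mul_assoc,
    div_mul_cancel₀ _ two_pi_pos.ne', map_ofFn_sq_of_hankel hH, ← Matrix.toLin'_apply,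
    hv.apply_eq_smul, dotProduct_smul, smul_eq_mul]

end HankelRayleigh

section TwoSidedBound

variable {S : Set ℝ} {L : ℝ[X] →ₗ[ℝ] ℝ} {n : ℕ} {H : Matrix (Fin n) (Fin n) ℝ} {lam : ℝ}

lemma hankel_eigenvalue_pos (hL : StrictlyPositiveOn S L)
    (hH : ∀ j k : Fin n, H j k = L (X ^ (j + k : ℕ))) (hn : 0 < n)
    (hlam : Module.End.HasEigenvalue (Matrix.toLin' H) lam) : 0 < lam := by
  obtain ⟨f, hf0, -, hf⟩ := exists_mul_integral_norm_aeval_sq_eq_map_sq hH hn hlam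
  have hfsq := hL.map_sq_pos hf0
  rw [← hf] at hfsq
  have hint : 0 ≤ ∫ φ in (0 : ℝ)..2 * π, ‖aeval (Complex.exp (φ * Complex.I)) f‖ ^ 2 :=
    intervalIntegral.integral_nonneg two_pi_pos.le fun φ _ ↦ by positivity
  exact (div_pos_iff_of_pos_right two_pi_pos).1 (pos_of_mul_pos_left hfsq hint)

namespace GaussQuadrature

variable (Q : GaussQuadrature L n)

lemma one_le_hankel_eigenvalue_mul_integral_kernel (hL : StrictlyPositiveOn S L)
    (hH : ∀ j k : Fin n, H j k = L (X ^ (j + k : ℕ))) (hn : 0 < n)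
    (hlam : Module.End.HasEigenvalue (Matrix.toLin' H) lam) :
    1 ≤ lam / (2 * π) * ∫ φ in (0 : ℝ)..2 * π, Q.kernel (Complex.exp (φ * Complex.I)) := by
  have hlam0 := hankel_eigenvalue_pos hL hH hn hlam
  obtain ⟨f, hf0, hdeg, hf⟩ := exists_mul_integral_norm_aeval_sq_eq_map_sq hH hn hlam
  have hint : ∫ φ in (0 : ℝ)..2 * π, ‖aeval (Complex.exp (φ * Complex.I)) f‖ ^ 2 ≤
      L (f ^ 2) * ∫ φ in (0 : ℝ)..2 * π, Q.kernel (Complex.exp (φ * Complex.I)) := by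
    rw [← intervalIntegral.integral_const_mul]
    exact intervalIntegral.integral_mono_on two_pi_pos.le
      (Continuous.intervalIntegrable (by fun_prop) ..)
      (Continuous.intervalIntegrable (by fun_prop) ..) fun φ _ ↦ Q.norm_aeval_sq_le hdeg _
  refine le_of_mul_le_mul_left ?_ (hL.map_sq_pos hf0)
  calc L (f ^ 2) * 1
      = lam / (2 * π) * ∫ φ in (0 : ℝ)..2 * π, ‖aeval (Complex.exp (φ * Complex.I)) f‖ ^ 2 := by
        rw [mul_one, hf]
    _ ≤ lam / (2 * π) *
          (L (f ^ 2) * ∫ φ in (0 : ℝ)..2 * π, Q.kernel (Complex.exp (φ * Complex.I))) := by gcongr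
    _ = _ := mul_left_comm ..

lemma sum_integral_norm_aeval_sq_eq_integral_kernel {P : ℕ → ℝ[X]}
    (hdeg : ∀ m, (P m).natDegree = m) (horth : ∀ m n, L (P m * P n) = if m = n then 1 else 0) :
    ∑ j ∈ Finset.range n, ∫ φ in (0 : ℝ)..2 * π, ‖aeval (Complex.exp (φ * Complex.I)) (P j)‖ ^ 2
      = ∫ φ in (0 : ℝ)..2 * π, Q.kernel (Complex.exp (φ * Complex.I)) := by
  rw [← intervalIntegral.integral_finsetSum fun j _ ↦
    Continuous.intervalIntegrable (by fun_prop) ..]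
  simp only [Q.sum_norm_aeval_sq_eq_kernel hdeg horth]

variable {Q}

lemma kernel_neg_one_mul_integral_kernel_near_pi_le (hpos : ∀ r ∈ Q.nodes, 0 < r) {α : ℝ}
    (hα0 : 0 ≤ α) (hα : α ≤ 1 / 2) :
    (1 - 2 * α) ^ 2 * (Q.kernel (-1) *
        ∫ φ in (π - α)..(π + α), Q.kernel (Complex.exp (φ * Complex.I))) ≤
      (1 + 2 * α) ^ 2 *
        ∫ φ in (0 : ℝ)..2 * π, ‖aeval (Complex.exp (φ * Complex.I)) (Q.kernelPoly (-1))‖ ^ 2 := by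
  calc _ ≤ (1 + 2 * α) ^ 2 * ∫ φ in (π - α)..(π + α),
          ‖aeval (Complex.exp (φ * Complex.I)) (Q.kernelPoly (-1))‖ ^ 2 := by
        simp only [← intervalIntegral.integral_const_mul]
        exact intervalIntegral.integral_mono_on (by linarith)
          (Continuous.intervalIntegrable (by fun_prop) ..)
          (Continuous.intervalIntegrable (by fun_prop) ..) fun φ hφ ↦
            Q.kernel_neg_one_mul_kernel_le hpos hα
              (abs_le.2 ⟨by linarith [hφ.1], by linarith [hφ.2]⟩)
    _ ≤ _ := by
        gcongr
        exact intervalIntegral.integral_mono_interval (by linarith [pi_gt_three]) (by linarith)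
          (by linarith [pi_gt_three]) (.of_forall fun φ ↦ by positivity)
          (Continuous.intervalIntegrable (by fun_prop) ..)

lemma mul_integral_kernel_near_pi_le (hpos : ∀ r ∈ Q.nodes, 0 < r)
    (hH : ∀ j k : Fin n, H j k = L (X ^ (j + k : ℕ))) (hn : 0 < n) (hlam0 : 0 ≤ lam)
    (hlam : lam ∈ lowerBounds {x | Module.End.HasEigenvalue (Matrix.toLin' H) x}) {α : ℝ}
    (hα0 : 0 ≤ α) (hα : α < 1 / 2) :
    lam / (2 * π) * ∫ φ in (π - α)..(π + α), Q.kernel (Complex.exp (φ * Complex.I)) ≤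
      ((1 + 2 * α) / (1 - 2 * α)) ^ 2 := by
  set I := ∫ φ in (π - α)..(π + α), Q.kernel (Complex.exp (φ * Complex.I))
  set J := ∫ φ in (0 : ℝ)..2 * π, ‖aeval (Complex.exp (φ * Complex.I)) (Q.kernelPoly (-1))‖ ^ 2
  have hrayleigh : lam / (2 * π) * J ≤ Q.kernel (-1) := by
    have := mul_integral_norm_aeval_sq_le_map_sq hH hlam (Q.natDegree_kernelPoly_lt hn (-1))
    rwa [Q.map_kernelPoly_sq hn, Complex.ofReal_neg, Complex.ofReal_one] at this
  rw [div_pow, le_div_iff₀ (pow_pos (by linarith) 2)]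
  refine le_of_mul_le_mul_right ?_ (Q.kernel_pos hn (-1))
  calc lam / (2 * π) * I * (1 - 2 * α) ^ 2 * Q.kernel (-1)
      = lam / (2 * π) * ((1 - 2 * α) ^ 2 * (Q.kernel (-1) * I)) := by ring
    _ ≤ lam / (2 * π) * ((1 + 2 * α) ^ 2 * J) :=
        mul_le_mul_of_nonneg_left
          (kernel_neg_one_mul_integral_kernel_near_pi_le hpos hα0 hα.le) (by positivity)
    _ = (1 + 2 * α) ^ 2 * (lam / (2 * π) * J) := mul_left_comm ..
    _ ≤ (1 + 2 * α) ^ 2 * Q.kernel (-1) := by gcongr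

lemma mul_integral_kernel_le (hpos : ∀ r ∈ Q.nodes, 0 < r)
    (hH : ∀ j k : Fin n, H j k = L (X ^ (j + k : ℕ))) (hn : 0 < n) (hlam0 : 0 ≤ lam)
    (hlam : lam ∈ lowerBounds {x | Module.End.HasEigenvalue (Matrix.toLin' H) x}) {a b α : ℝ}
    (ha : 0 < a) (hab : a ≤ b) {M : ℕ} (hM : M < (Q.nodes.filter (· ∈ Set.Icc a b)).card)
    (hα0 : 0 < α) (hα : α < 1 / 2) :
    lam / (2 * π) * ∫ φ in (0 : ℝ)..2 * π, Q.kernel (Complex.exp (φ * Complex.I)) ≤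
      (1 + 2 * π / α * contractionFactor a b (cos (α / 2) - cos α) ^ M) *
        ((1 + 2 * α) / (1 - 2 * α)) ^ 2 := by
  have hq := contractionFactor_nonneg (κ := cos (α / 2) - cos α) ha hab
    (by linarith [cos_le_one (α / 2), neg_one_le_cos α])
  refine (mul_le_mul_of_nonneg_left (Q.integral_kernel_le hpos ha hab hM hα0
    (by linarith [pi_gt_three])) (by positivity)).trans ?_
  rw [mul_left_comm]
  gcongr
  exact mul_integral_kernel_near_pi_le hpos hH hn hlam0 hlam hα0.le hα

end GaussQuadrature

lemma exists_concentration_bound_lt {a b c : ℝ} (ha : 0 < a) (hab : a ≤ b) (hc : 1 < c) :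
    ∃ α : ℝ, 0 < α ∧ α < 1 / 2 ∧ ∃ M : ℕ,
      (1 + 2 * π / α * contractionFactor a b (cos (α / 2) - cos α) ^ M) *
        ((1 + 2 * α) / (1 - 2 * α)) ^ 2 < c := by
  have hratio : Tendsto (fun α : ℝ ↦ ((1 + 2 * α) / (1 - 2 * α)) ^ 2) (𝓝 0) (𝓝 1) := by
    have hcont : ContinuousAt (fun α : ℝ ↦ ((1 + 2 * α) / (1 - 2 * α)) ^ 2) 0 := by
      fun_prop (disch := norm_num)
    simpa using hcont.tendsto
  obtain ⟨α, hαc, hα0, hα⟩ :=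
    (((hratio.eventually_lt_const hc).filter_mono nhdsWithin_le_nhds).and
      (Ioo_mem_nhdsGT (show (0 : ℝ) < 1 / 2 by norm_num))).exists
  have hκ : 0 < cos (α / 2) - cos α := sub_pos.2 <|
    cos_lt_cos_of_nonneg_of_le_pi (by linarith) (by linarith [pi_gt_three]) (by linarith)
  have hq0 := contractionFactor_nonneg (κ := cos (α / 2) - cos α) ha hab
    (by linarith [cos_le_one (α / 2), neg_one_le_cos α])
  have hbound : Tendsto (fun M : ℕ ↦
      (1 + 2 * π / α * contractionFactor a b (cos (α / 2) - cos α) ^ M) *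
        ((1 + 2 * α) / (1 - 2 * α)) ^ 2) atTop (𝓝 (((1 + 2 * α) / (1 - 2 * α)) ^ 2)) := by
    simpa using (((tendsto_pow_atTop_nhds_zero_of_lt_one hq0
      (contractionFactor_lt_one ha hab hκ)).const_mul (2 * π / α)).const_add 1).mul_const
        (((1 + 2 * α) / (1 - 2 * α)) ^ 2)
  exact ⟨α, hα0, hα, (hbound.eventually_lt_const hαc).exists⟩

end TwoSidedBound

theorem smallest_eigenvalue_asymptotically_sharp_general {μ : Measure ℝ}
    (hnonneg : ∀ᵐ x ∂μ, 0 ≤ x) (hexp : ∀ c : ℝ, Integrable (fun x ↦ exp (c * √x)) μ) {a b : ℝ}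
    (ha : 0 < a) (hsupp : (μ.support ∩ Set.Ioo a b).Infinite)
    {H : (N : ℕ) → Matrix (Fin (N + 1)) (Fin (N + 1)) ℝ}
    (hH : ∀ N, ∀ j k : Fin (N + 1), H N j k = ∫ x, x ^ (j + k : ℕ) ∂μ) {lam : ℕ → ℝ}
    (hlam : ∀ N, IsLeast {x | Module.End.HasEigenvalue (Matrix.toLin' (H N)) x} (lam N))
    {P : ℕ → ℝ[X]} (hdeg : ∀ n, (P n).natDegree = n)
    (horth : ∀ m n, ∫ x, (P m).eval x * (P n).eval x ∂μ = if m = n then 1 else 0) :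
    Tendsto (fun N ↦ lam N / (2 * π) * ∑ j ∈ Finset.range (N + 1),
      ∫ φ in (0 : ℝ)..2 * π, ‖aeval (Complex.exp (φ * Complex.I)) (P j)‖ ^ 2) atTop (𝓝 1) := by
  have hint := integrable_pow_of_integrable_exp_sqrt hnonneg (by simpa using hexp 1)
  have hL : StrictlyPositiveOn (Set.Ici 0) (momentFunctional μ) :=
    strictlyPositiveOn_momentFunctional hint hnonneg (hsupp.mono Set.inter_subset_left)
  have hab : a ≤ b := (hsupp.nonempty.mono Set.inter_subset_right |> Set.nonempty_Ioo.1).le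
  have hH' : ∀ N, ∀ j k : Fin (N + 1), H N j k = momentFunctional μ (X ^ (j + k : ℕ)) :=
    fun N j k ↦ by simp [hH, momentFunctional_apply hint]
  have horth' : ∀ m n, momentFunctional μ (P m * P n) = if m = n then 1 else 0 :=
    fun m n ↦ by simpa [momentFunctional_apply hint] using horth m n
  let Q := fun N ↦ (GaussQuadrature.nonempty_of_orthonormal hL hdeg horth' (N + 1)).some
  have hnodes : ∀ N, ∀ r ∈ (Q N).nodes, 0 < r := fun N _ hr ↦ (Q N).nodes_pos hL hr
  simp only [(Q _).sum_integral_norm_aeval_sq_eq_integral_kernel hdeg horth']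
  refine tendsto_order.2 ⟨fun c hc ↦ .of_forall fun N ↦ hc.trans_le <|
    (Q N).one_le_hankel_eigenvalue_mul_integral_kernel hL (hH' N) N.succ_pos (hlam N).1,
    fun c hc ↦ ?_⟩
  obtain ⟨α, hα0, hα, M, hM⟩ := exists_concentration_bound_lt ha hab hc
  filter_upwards [eventually_lt_card_nodes_filter hnonneg hexp hnodes ha hsupp M] with N hN
  exact (GaussQuadrature.mul_integral_kernel_le (hnodes N) (hH' N) N.succ_pos
    (hankel_eigenvalue_pos hL (hH' N) N.succ_pos (hlam N).1).le (hlam N).2 ha hab hN hα0 hα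
    ).trans_lt hM

section FreudWeight

/-- The measure `exp (-x ^ β) dx` on `(0, ∞)`. -/
noncomputable def freudMeasure (β : ℝ) : Measure ℝ :=
  (volume.restrict (Set.Ioi 0)).withDensity fun x ↦ ENNReal.ofReal (exp (-(x ^ β)))

variable {β : ℝ}

lemma integral_freudMeasure (f : ℝ → ℝ) :
    ∫ x, f x ∂freudMeasure β = ∫ x in Set.Ioi 0, f x * exp (-(x ^ β)) := by
  rw [freudMeasure, integral_withDensity_eq_integral_toReal_smul (by fun_prop)
    (.of_forall fun _ ↦ ENNReal.ofReal_lt_top)]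
  simp only [ENNReal.toReal_ofReal (exp_pos _).le, smul_eq_mul, mul_comm]

lemma ae_freudMeasure_nonneg : ∀ᵐ x ∂freudMeasure β, 0 ≤ x :=
  withDensity_absolutelyContinuous _ _ <|
    (ae_restrict_mem measurableSet_Ioi).mono fun _ hx ↦ le_of_lt hx

lemma Ioi_zero_subset_support_freudMeasure : Set.Ioi 0 ⊆ (freudMeasure β).support := by
  have hac : volume.restrict (Set.Ioi 0) ≪ freudMeasure β :=
    withDensity_absolutelyContinuous' (by fun_prop) (.of_forall fun x ↦ by simp [exp_pos])
  refine fun x hx ↦ hac.support_mono (Measure.interior_inter_support ⟨?_, ?_⟩)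
  · rwa [interior_Ioi]
  · rw [Measure.support_eq_univ]
    exact Set.mem_univ x

lemma exists_mul_sqrt_le_rpow_div_two_add (hβ : 1 / 2 < β) (c : ℝ) :
    ∃ C, ∀ x > 0, c * √x ≤ x ^ β / 2 + C := by
  set R := (2 * |c|) ^ (β - 1 / 2)⁻¹
  refine ⟨|c| * √R, fun x hx ↦ ?_⟩
  refine (mul_le_mul_of_nonneg_right (le_abs_self c) (sqrt_nonneg x)).trans ?_
  rcases le_total x R with hxR | hRx
  · calc |c| * √x ≤ |c| * √R := by gcongr
      _ ≤ x ^ β / 2 + |c| * √R := le_add_of_nonneg_left (by positivity)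
  · have hpow : 2 * |c| ≤ x ^ (β - 1 / 2) :=
      (rpow_inv_le_iff_of_pos (by positivity) hx.le (by linarith)).1 hRx
    calc |c| * √x ≤ x ^ (β - 1 / 2) / 2 * √x := by gcongr; linarith
      _ = x ^ β / 2 := by
        rw [sqrt_eq_rpow, div_mul_eq_mul_div, ← rpow_add hx, sub_add_cancel]
      _ ≤ x ^ β / 2 + |c| * √R := le_add_of_nonneg_right (by positivity)

lemma integrable_exp_mul_sqrt_freudMeasure (hβ : 1 / 2 < β) (c : ℝ) :
    Integrable (fun x ↦ exp (c * √x)) (freudMeasure β) := by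
  obtain ⟨C, hC⟩ := exists_mul_sqrt_le_rpow_div_two_add hβ c
  have hdom : IntegrableOn (fun x : ℝ ↦ exp C * exp (-(1 / 2) * x ^ β)) (Set.Ioi 0) := by
    have := integrableOn_rpow_mul_exp_neg_mul_rpow (p := β) (s := 0) (b := 1 / 2)
      (by norm_num) (by linarith) (by norm_num)
    simpa [IntegrableOn] using this.const_mul (exp C)
  rw [freudMeasure, integrable_withDensity_iff_integrable_smul' (by fun_prop)
    (.of_forall fun _ ↦ ENNReal.ofReal_lt_top)]
  refine Integrable.mono' hdom (by fun_prop) ?_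
  filter_upwards [ae_restrict_mem measurableSet_Ioi] with x hx
  rw [ENNReal.toReal_ofReal (exp_pos _).le, smul_eq_mul, norm_of_nonneg (by positivity), ← exp_add,
    ← exp_add]
  exact exp_le_exp.2 (by linarith [hC x hx])

end FreudWeight

/-- For the weight `exp(−x^β)` on `[0,∞)` with `β > 1/2`,
the lower bound `lam N ≥ 2π/∑_{j=0}^N K_jj` for the smallest eigenvalue
`lam N` of the Hankel matrix `H N` is asymptotically sharp:
`(lam N/(2π)) · ∑_{j=0}^N K_jj → 1` as `N → ∞`. -/
theorem smallest_eigenvalue_asymptotically_sharp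
    (β : ℝ) (hβ : 1/2 < β)
    (μ : ℕ → ℝ) (hμ : ∀ k, μ k = ∫ x in Set.Ioi (0:ℝ), x ^ k * Real.exp (-(x ^ β)))
    (H : (N : ℕ) → Matrix (Fin (N + 1)) (Fin (N + 1)) ℝ)
    (hH : ∀ N, ∀ j k : Fin (N + 1), H N j k = μ ((j : ℕ) + (k : ℕ)))
    (hpd : ∀ N, (H N).PosDef)
    (lam : ℕ → ℝ)
    (hlam : ∀ N, IsLeast
      {x : ℝ | Module.End.HasEigenvalue (Matrix.toLin' (H N)) x} (lam N))
    (P : ℕ → Polynomial ℝ)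
    (hdeg : ∀ n, (P n).natDegree = n)
    (hlead : ∀ n, 0 < (P n).leadingCoeff)
    (horth : ∀ m n, (∫ x in Set.Ioi (0:ℝ),
      (P m).eval x * (P n).eval x * Real.exp (-(x ^ β))) = if m = n then 1 else 0)
    (K : ℕ → ℝ)
    (hK : ∀ j, K j = ∫ φ in (0:ℝ)..(2 * π),
      ‖Polynomial.aeval (Complex.exp (φ * Complex.I)) (P j)‖ ^ 2) :
    Tendsto (fun N : ℕ => lam N / (2 * π) * ∑ j ∈ Finset.range (N + 1), K j)
      atTop (nhds 1) := by
  have hsupp : Set.Ioo 1 2 ⊆ (freudMeasure β).support ∩ Set.Ioo 1 2 := fun x hx ↦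
    ⟨Ioi_zero_subset_support_freudMeasure (one_pos.trans hx.1), hx⟩
  simp only [hK]
  exact smallest_eigenvalue_asymptotically_sharp_general ae_freudMeasure_nonneg
    (integrable_exp_mul_sqrt_freudMeasure hβ) one_pos
    ((Set.Ioo_infinite one_lt_two).mono hsupp)
    (fun N j k ↦ by rw [hH, hμ, integral_freudMeasure]) hlam hdeg
    (fun m n ↦ by rw [integral_freudMeasure, horth])
end
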